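/- arXiv:2307.14566 — 4 statements merged into one kernel-verified Lean document; each statement's English description precedes it below -/
import Mathlib

section
/- For every positive integer ℓ, the mean of the demerit factor over all 2^ℓ binary sequences of length ℓ equals 1 - 1/ℓ; that is, E_ℓ[ADF] = 1 - 1/ℓ. -/
/-!
Expanding the square, `autocorr f s ^ 2` is a sum over pairs `j`, `k` of
`(f (j + s) * f j) * (f (k + s) * f k)`. For `s ≠ 0` and `j ≠ k`, the largest of the four indices
`j + s`, `j`, `k + s`, `k` occurs exactly once among them, so flipping the sign of the sequence
there negates the product, and its sum over all sequences vanishes (`sum_offdiag`). On the diagonal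
`j = k` the product is `1` when both indices lie in `[0, ℓ)` and `0` otherwise. Hence the mean of
the numerator of `ADF` counts the ordered pairs of distinct indices in `[0, ℓ)`, of which there are
`ℓ * (ℓ - 1)` (`sum_numerator`). The denominator is always `ℓ ^ 2`.
-/

open Finset Filter

noncomputable section

/-- The binary sequence of length `ℓ` determined by sign choices `ε`. -/
def seqOf (ℓ : ℕ) (ε : Fin ℓ → Bool) : ℤ → ℤ := fun j =>
  if h : 0 ≤ j ∧ j < (ℓ : ℤ) then (if ε ⟨j.toNat, by omega⟩ then 1 else -1) else 0

/-- Aperiodic autocorrelation of `f` at shift `s`. -/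
def autocorr (f : ℤ → ℤ) (s : ℤ) : ℤ := ∑ᶠ j : ℤ, f (j + s) * f j

/-- The sum of squares of all aperiodic autocorrelations. -/
def ssac (f : ℤ → ℤ) : ℝ := ∑ᶠ s : ℤ, ((autocorr f s : ℝ)) ^ 2

/-- The demerit factor of `f`. -/
def ADF (f : ℤ → ℤ) : ℝ :=
  (∑ᶠ s ∈ {s : ℤ | s ≠ 0}, ((autocorr f s : ℝ)) ^ 2) / (autocorr f 0 : ℝ) ^ 2

/-- Expectation of `v` over the `2^ℓ` binary sequences of length `ℓ`, each with
equal probability. -/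
def expect (ℓ : ℕ) (v : (ℤ → ℤ) → ℝ) : ℝ :=
  (∑ ε : Fin ℓ → Bool, v (seqOf ℓ ε)) / 2 ^ ℓ

/-- The `p`-th central moment of `v` over binary sequences of length `ℓ`. -/
def centralMoment (p ℓ : ℕ) (v : (ℤ → ℤ) → ℝ) : ℝ :=
  expect ℓ fun f => (v f - expect ℓ v) ^ p

theorem seqOf_of_notMem {ℓ : ℕ} (ε : Fin ℓ → Bool) {j : ℤ} (h : ¬ (0 ≤ j ∧ j < (ℓ : ℤ))) :
    seqOf ℓ ε j = 0 := by
  simp only [seqOf, dif_neg h]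

theorem seqOf_mul_self (ℓ : ℕ) (ε : Fin ℓ → Bool) (j : ℤ) :
    seqOf ℓ ε j * seqOf ℓ ε j = if 0 ≤ j ∧ j < (ℓ : ℤ) then 1 else 0 := by
  unfold seqOf
  split_ifs <;> simp

/-- Negating the entry at position `t` permutes the binary sequences of length `ℓ`. Positions
outside `[0, ℓ)` are allowed: the entry there is zero and the permutation is the identity. -/
theorem exists_flip (ℓ : ℕ) (t : ℤ) : ∃ σ : Equiv.Perm (Fin ℓ → Bool), ∀ ε m,
    seqOf ℓ (σ ε) m = if m = t then - seqOf ℓ ε m else seqOf ℓ ε m := by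
  by_cases ht : 0 ≤ t ∧ t < (ℓ : ℤ)
  · let i : Fin ℓ := ⟨t.toNat, by omega⟩
    have hinv : Function.Involutive
        (fun (ε : Fin ℓ → Bool) => Function.update ε i (!(ε i))) := by
      intro ε
      simp
    refine ⟨hinv.toPerm, fun ε m => ?_⟩
    change seqOf ℓ (Function.update ε i (!(ε i))) m = _
    by_cases hm : 0 ≤ m ∧ m < (ℓ : ℤ)
    · by_cases hmt : m = t
      · subst hmt
        simp only [seqOf, dif_pos hm, if_true]
        change (if Function.update ε i (!(ε i)) i = true then (1 : ℤ) else -1)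
          = -(if ε i = true then 1 else -1)
        cases h : ε i <;> simp
      · have hne : (⟨m.toNat, by omega⟩ : Fin ℓ) ≠ i := by
          simp only [i, ne_eq, Fin.mk.injEq]
          omega
        simp only [seqOf, dif_pos hm, if_neg hmt, Function.update_of_ne hne]
    · simp [seqOf_of_notMem _ hm]
  · refine ⟨1, fun ε m => ?_⟩
    split_ifs with h
    · subst h
      simp [seqOf_of_notMem _ ht]
    · rfl

/-- The off-diagonal terms of the expanded square have mean zero. -/
theorem sum_offdiag (ℓ : ℕ) {s j k : ℤ} (hs : s ≠ 0) (hjk : j ≠ k) :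
    ∑ ε : Fin ℓ → Bool, (seqOf ℓ ε (j + s) * seqOf ℓ ε j) *
      (seqOf ℓ ε (k + s) * seqOf ℓ ε k) = 0 := by
  obtain ⟨σ, hσ⟩ := exists_flip ℓ (max (max (j + s) j) (max (k + s) k))
  have h := Equiv.sum_comp σ (fun ε => (seqOf ℓ ε (j + s) * seqOf ℓ ε j) *
      (seqOf ℓ ε (k + s) * seqOf ℓ ε k))
  have hneg : ∀ ε, (seqOf ℓ (σ ε) (j + s) * seqOf ℓ (σ ε) j) *
      (seqOf ℓ (σ ε) (k + s) * seqOf ℓ (σ ε) k) =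
      -((seqOf ℓ ε (j + s) * seqOf ℓ ε j) * (seqOf ℓ ε (k + s) * seqOf ℓ ε k)) := by
    intro ε
    simp only [hσ]
    split_ifs <;> first | omega | ring
  simp only [hneg, Finset.sum_neg_distrib] at h
  omega

theorem autocorr_seqOf (ℓ : ℕ) (ε : Fin ℓ → Bool) (s : ℤ) :
    autocorr (seqOf ℓ ε) s =
      ∑ j ∈ Finset.Ico (0 : ℤ) ℓ, seqOf ℓ ε (j + s) * seqOf ℓ ε j := by
  refine finsum_eq_sum_of_support_subset _ fun j hj => ?_
  by_contra h
  simp only [Finset.coe_Ico, Set.mem_Ico] at h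
  exact hj (by simp [seqOf_of_notMem ε h])

theorem autocorr_zero (ℓ : ℕ) (ε : Fin ℓ → Bool) : autocorr (seqOf ℓ ε) 0 = ℓ := by
  rw [autocorr_seqOf, Finset.sum_congr rfl (g := fun _ => 1)]
  · simp
  · intro j hj
    rw [add_zero, seqOf_mul_self, if_pos (Finset.mem_Ico.1 hj)]

theorem autocorr_eq_zero {ℓ : ℕ} (ε : Fin ℓ → Bool) {s : ℤ}
    (hs : s ∉ Finset.Ioo (-(ℓ : ℤ)) ℓ) : autocorr (seqOf ℓ ε) s = 0 := by
  rw [autocorr_seqOf]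
  refine Finset.sum_eq_zero fun j hj => ?_
  rw [Finset.mem_Ico] at hj
  rw [Finset.mem_Ioo] at hs
  rw [seqOf_of_notMem ε (j := j + s) (by omega), zero_mul]

theorem ADF_seqOf (ℓ : ℕ) (ε : Fin ℓ → Bool) :
    ADF (seqOf ℓ ε) =
      ((∑ s ∈ (Finset.Ioo (-(ℓ : ℤ)) ℓ).erase 0, autocorr (seqOf ℓ ε) s ^ 2 : ℤ) : ℝ) /
        (ℓ : ℝ) ^ 2 := by
  unfold ADF
  rw [autocorr_zero]
  push_cast
  congr 1
  refine finsum_mem_eq_sum_of_inter_support_eq _ ?_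
  ext s
  simp only [Set.mem_inter_iff, Set.mem_ofPred_eq, Function.mem_support, Finset.mem_coe,
    Finset.mem_erase]
  constructor
  · rintro ⟨h0, h⟩
    refine ⟨⟨h0, ?_⟩, h⟩
    by_contra hs
    exact h (by simp [autocorr_eq_zero ε hs])
  · rintro ⟨⟨h0, _⟩, h⟩
    exact ⟨h0, h⟩

/-- For a nonzero shift, only the diagonal of the expanded square contributes. -/
theorem sum_autocorr_sq (ℓ : ℕ) {s : ℤ} (hs : s ≠ 0) :
    ∑ ε : Fin ℓ → Bool, autocorr (seqOf ℓ ε) s ^ 2 =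
      ∑ j ∈ Finset.Ico (0 : ℤ) ℓ, if 0 ≤ j + s ∧ j + s < (ℓ : ℤ) then 2 ^ ℓ else 0 := by
  simp only [autocorr_seqOf, sq, Finset.sum_mul_sum]
  rw [Finset.sum_comm]
  refine Finset.sum_congr rfl fun j hj => ?_
  rw [Finset.sum_comm, Finset.sum_eq_single_of_mem j hj
    fun k _ hk => sum_offdiag ℓ hs hk.symm]
  have hdiag : ∀ ε : Fin ℓ → Bool,
      (seqOf ℓ ε (j + s) * seqOf ℓ ε j) * (seqOf ℓ ε (j + s) * seqOf ℓ ε j) =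
        if 0 ≤ j + s ∧ j + s < (ℓ : ℤ) then 1 else 0 := by
    intro ε
    rw [mul_mul_mul_comm, seqOf_mul_self, seqOf_mul_self, if_pos (Finset.mem_Ico.1 hj), mul_one]
  simp only [hdiag]
  split_ifs <;> simp

theorem sum_numerator (ℓ : ℕ) :
    ∑ ε : Fin ℓ → Bool, ∑ s ∈ (Finset.Ioo (-(ℓ : ℤ)) ℓ).erase 0,
      autocorr (seqOf ℓ ε) s ^ 2 = ℓ * (ℓ - 1) * 2 ^ ℓ := by
  rw [Finset.sum_comm, Finset.sum_congr rfl
    fun s hs => sum_autocorr_sq ℓ (Finset.ne_of_mem_erase hs), Finset.sum_comm,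
    Finset.sum_congr rfl (g := fun _ => ((ℓ : ℤ) - 1) * 2 ^ ℓ)]
  · simp [mul_assoc]
  · intro j hj
    rw [Finset.mem_Ico] at hj
    have hset : ((Finset.Ioo (-(ℓ : ℤ)) ℓ).erase 0).filter
        (fun s => 0 ≤ j + s ∧ j + s < (ℓ : ℤ)) = (Finset.Ico (-j) (ℓ - j)).erase 0 := by
      ext s
      simp only [Finset.mem_filter, Finset.mem_erase, Finset.mem_Ioo, Finset.mem_Ico]
      omega
    have hcard : (((Finset.Ico (-j) (ℓ - j)).erase 0).card : ℤ) = ℓ - 1 := by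
      rw [Finset.card_erase_of_mem (by rw [Finset.mem_Ico]; omega), Int.card_Ico]
      omega
    rw [← Finset.sum_filter, hset, Finset.sum_const, nsmul_eq_mul, hcard]

/-- Sarwate 1984: the mean demerit factor over all binary sequences of length `ℓ`
is `1 - 1/ℓ`. -/
theorem mean_ADF (ℓ : ℕ) (hℓ : 0 < ℓ) : expect ℓ ADF = 1 - 1 / (ℓ : ℝ) := by
  have hℓ' : (ℓ : ℝ) ≠ 0 := by positivity
  simp only [_root_.expect, ADF_seqOf]
  rw [← Finset.sum_div, ← Int.cast_sum, sum_numerator]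
  push_cast
  field_simp
end
end

section
/- For every positive integer ℓ, the third central moment of the demerit factor over all 2^ℓ binary sequences of length ℓ equals (160ℓ⁴ - 1296ℓ³ + 3296ℓ² - 2496ℓ)/ℓ⁶ if ℓ ≡ 0 (mod 4), equals (160ℓ⁴ - 1296ℓ³ + 3296ℓ² - 2736ℓ + 576)/ℓ⁶ if ℓ ≡ 1 or 3 (mod 4), and equals (160ℓ⁴ - 1296ℓ³ + 3296ℓ² - 2496ℓ - 384)/ℓ⁶ if ℓ ≡ 2 (mod 4). -/
/-! The third central moment of the demerit factor is computed by Fourier–Walsh expansion.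

Expanding the squared autocorrelations (`sum_sq_autocorr`), the off-peak energy of a sequence `f`
differs from its mean by `8 A + 4 B`, where `A` is the sum of the Walsh functions of all quadruples
`{x, x + d, x + e, x + d + e}` with `1 ≤ d < e`, and `B` is the sum over all pairs of positions of
equal parity. Products of Walsh functions are Walsh functions of symmetric differences, and
nontrivial ones average to zero, so the mean of `(8 A + 4 B) ^ 3` is a weighted count of triples of
such sets with empty symmetric difference (`centralMoment_eq`). There are four kinds of triples.

* Three quadruples: each two share a pair, so they are the unions of two out of three disjoint
  pairs. A union of two pairs is a quadruple iff the pairs have equal length or equal midpoint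
  (`union_mem_quads_iff`), and among three pairs the same alternative holds throughout
  (`tri_quads_sum`).
* Two quadruples and a pair: the quadruples are completions of a common three-element set, which
  has at most three completions (`tri_quads_pairs_sum`).
* A quadruple and two pairs: the pairs are disjoint, with equal length or equal midpoint
  (`tri_pairs_quads_sum`).
* Three pairs: three distinct positions of equal parity (`tri_pairs_sum`).

The counts are evaluated with `ℓ = 2 p + r`. The first two contain the sum of `max(ℓ - 3 b, 0)` over
`b ≥ 1`, which would depend on `ℓ` modulo `3`, but the weights make it cancel (`numerator_closed`).
The third contains the sum of `max(ℓ - 4 b, 0)`, which produces the case distinction modulo `4`. -/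

open Finset Filter

noncomputable section

namespace ThirdMoment

/-! ### Walsh functions, quadruples and even pairs -/

/-- The sign at position `i`, as a real number; positions `i ≥ ℓ` get the value `1`, so that
`sgn ℓ ε i ^ 2 = 1` holds for every `i`. -/
def sgn (ℓ : ℕ) (ε : Fin ℓ → Bool) (i : ℕ) : ℝ :=
  if h : i < ℓ then (if ε ⟨i, h⟩ then 1 else -1) else 1

/-- The Walsh function of `P` evaluated at the signs `f`. -/
def chi (f : ℕ → ℝ) (P : Finset ℕ) : ℝ := ∏ i ∈ P, f i

/-- The four-element sets `{x, x + d, x + e, x + d + e}` in `{0, …, ℓ - 1}` with `1 ≤ d < e`, that is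
the sets `{a < b < c < d}` with `a + d = b + c`. -/
def quads (ℓ : ℕ) : Finset (Finset ℕ) :=
  ((range ℓ ×ˢ range ℓ ×ˢ range ℓ).filter
    (fun t => 1 ≤ t.2.1 ∧ t.2.1 < t.2.2 ∧ t.1 + t.2.1 + t.2.2 < ℓ)).image
    (fun t => {t.1, t.1 + t.2.1, t.1 + t.2.2, t.1 + t.2.1 + t.2.2})

/-- The two-element subsets of `{0, …, ℓ - 1}` whose elements have equal parity. -/
def evPairs (ℓ : ℕ) : Finset (Finset ℕ) :=
  ((range ℓ ×ˢ range ℓ).filter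
    (fun t => 1 ≤ t.2 ∧ t.1 + 2 * t.2 < ℓ)).image
    (fun t => {t.1, t.1 + 2 * t.2})

lemma mem_quads {ℓ : ℕ} {Q : Finset ℕ} : Q ∈ quads ℓ ↔
    ∃ x d e, 1 ≤ d ∧ d < e ∧ x + d + e < ℓ ∧ Q = {x, x + d, x + e, x + d + e} := by
  simp only [quads, mem_image, mem_filter, mem_product, mem_range, Prod.exists]
  constructor
  · rintro ⟨x, d, e, ⟨-, h1, h2, h3⟩, rfl⟩
    exact ⟨x, d, e, h1, h2, h3, rfl⟩
  · rintro ⟨x, d, e, h1, h2, h3, rfl⟩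
    exact ⟨x, d, e, ⟨⟨by omega, by omega, by omega⟩, h1, h2, h3⟩, rfl⟩

lemma mem_evPairs {ℓ : ℕ} {Q : Finset ℕ} : Q ∈ evPairs ℓ ↔
    ∃ x d, 1 ≤ d ∧ x + 2 * d < ℓ ∧ Q = {x, x + 2 * d} := by
  simp only [evPairs, mem_image, mem_filter, mem_product, mem_range, Prod.exists]
  constructor
  · rintro ⟨x, d, ⟨-, h1, h2⟩, rfl⟩
    exact ⟨x, d, h1, h2, rfl⟩
  · rintro ⟨x, d, h1, h2, rfl⟩
    exact ⟨x, d, ⟨⟨by omega, by omega⟩, h1, h2⟩, rfl⟩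

lemma quads_subset {ℓ : ℕ} {Q : Finset ℕ} (h : Q ∈ quads ℓ) : Q ⊆ range ℓ := by
  obtain ⟨x, d, e, h1, h2, h3, rfl⟩ := mem_quads.1 h
  intro i hi
  simp only [mem_insert, mem_singleton] at hi
  simp only [mem_range]
  omega

lemma evPairs_subset {ℓ : ℕ} {Q : Finset ℕ} (h : Q ∈ evPairs ℓ) : Q ⊆ range ℓ := by
  obtain ⟨x, d, h1, h2, rfl⟩ := mem_evPairs.1 h
  intro i hi
  simp only [mem_insert, mem_singleton] at hi
  simp only [mem_range]
  omega

lemma quads_card {ℓ : ℕ} {Q : Finset ℕ} (h : Q ∈ quads ℓ) : Q.card = 4 := by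
  obtain ⟨x, d, e, h1, h2, h3, rfl⟩ := mem_quads.1 h
  rw [card_insert_of_notMem, card_insert_of_notMem, card_pair]
  all_goals first | omega | (simp only [mem_insert, mem_singleton]; omega)

lemma evPairs_card {ℓ : ℕ} {Q : Finset ℕ} (h : Q ∈ evPairs ℓ) : Q.card = 2 := by
  obtain ⟨x, d, h1, h2, rfl⟩ := mem_evPairs.1 h
  rw [card_pair]; omega

/-! ### The demerit factor as a sum over shifts -/

lemma sgn_sq (ℓ : ℕ) (ε : Fin ℓ → Bool) (i : ℕ) : sgn ℓ ε i * sgn ℓ ε i = 1 := by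
  unfold sgn; split_ifs <;> norm_num

lemma seqOf_natCast {ℓ : ℕ} (ε : Fin ℓ → Bool) {i : ℕ} (h : i < ℓ) :
    ((seqOf ℓ ε (i : ℤ) : ℤ) : ℝ) = sgn ℓ ε i := by
  unfold seqOf sgn
  rw [dif_pos ⟨by omega, by omega⟩, dif_pos h]
  simp only [Int.toNat_natCast]
  split_ifs <;> simp

lemma seqOf_eq_zero {ℓ : ℕ} (ε : Fin ℓ → Bool) {j : ℤ} (h : ¬ (0 ≤ j ∧ j < ℓ)) :
    seqOf ℓ ε j = 0 := by
  unfold seqOf; rw [dif_neg h]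

lemma autocorr_neg (f : ℤ → ℤ) (s : ℤ) : autocorr f (-s) = autocorr f s := by
  unfold autocorr
  rw [← finsum_comp_equiv (Equiv.addRight s)]
  refine finsum_congr fun j => ?_
  simp [mul_comm]

lemma autocorr_seqOf {ℓ : ℕ} (ε : Fin ℓ → Bool) (d : ℕ) :
    ((autocorr (seqOf ℓ ε) d : ℤ) : ℝ) = ∑ x ∈ range (ℓ - d), sgn ℓ ε x * sgn ℓ ε (x + d) := by
  unfold autocorr
  rw [finsum_eq_sum_of_support_subset (s := (range (ℓ - d)).map Nat.castEmbedding)]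
  · rw [sum_map]
    push_cast
    refine sum_congr rfl fun x hx => ?_
    rw [mem_range] at hx
    have := seqOf_natCast ε (i := x + d) (by omega)
    push_cast at this
    simp only [Nat.castEmbedding_apply]
    rw [this, seqOf_natCast ε (by omega), mul_comm]
  · intro j hj
    simp only [Function.mem_support, ne_eq, mul_eq_zero, not_or] at hj
    have h1 : 0 ≤ j + d ∧ j + d < ℓ := by
      by_contra h; exact hj.1 (seqOf_eq_zero ε h)
    have h2 : 0 ≤ j ∧ j < ℓ := by
      by_contra h; exact hj.2 (seqOf_eq_zero ε h)
    simp only [coe_map, Set.mem_image, mem_coe, mem_range, Nat.castEmbedding_apply]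
    exact ⟨j.toNat, by omega, by omega⟩

lemma ADF_seqOf {ℓ : ℕ} (ε : Fin ℓ → Bool) :
    ADF (seqOf ℓ ε) = (2 * ∑ d ∈ Ico 1 ℓ,
      (∑ x ∈ range (ℓ - d), sgn ℓ ε x * sgn ℓ ε (x + d)) ^ 2) / (ℓ : ℝ) ^ 2 := by
  have h0 : ((autocorr (seqOf ℓ ε) 0 : ℤ) : ℝ) = ℓ := by
    have := autocorr_seqOf ε 0
    simpa [sgn_sq] using this
  unfold ADF
  rw [h0]
  congr 1
  have hz : ∀ d : ℕ, ℓ ≤ d → autocorr (seqOf ℓ ε) d = 0 := by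
    intro d hd
    have := autocorr_seqOf ε d
    rw [Nat.sub_eq_zero_of_le hd] at this
    simpa using this
  have hd : Disjoint ((Ico 1 ℓ).map (Nat.castEmbedding (R := ℤ)))
      ((Ico 1 ℓ).map ((Nat.castEmbedding (R := ℤ)).trans (Equiv.neg ℤ).toEmbedding)) := by
    rw [disjoint_left]
    intro a ha hb
    simp only [Finset.mem_map, mem_Ico, Nat.castEmbedding_apply, Function.Embedding.trans_apply,
      Equiv.coe_toEmbedding, Equiv.neg_apply] at ha hb
    obtain ⟨x, hx, rfl⟩ := ha
    obtain ⟨y, hy, h⟩ := hb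
    omega
  rw [finsum_mem_eq_sum_of_inter_support_eq (t := ((Ico 1 ℓ).map (Nat.castEmbedding (R := ℤ))).disjUnion
      ((Ico 1 ℓ).map ((Nat.castEmbedding (R := ℤ)).trans (Equiv.neg ℤ).toEmbedding)) hd)]
  · rw [sum_disjUnion, sum_map, sum_map, two_mul]
    congr 1
    · refine sum_congr rfl fun d _ => ?_
      rw [← autocorr_seqOf]; rfl
    · refine sum_congr rfl fun d _ => ?_
      rw [← autocorr_seqOf]
      simp [autocorr_neg]
  · ext s
    simp only [Set.mem_inter_iff, Set.mem_ofPred_eq, Function.mem_support, coe_disjUnion, coe_map,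
      Set.mem_union, Set.mem_image, mem_coe, mem_Ico, Nat.castEmbedding_apply,
      Function.Embedding.trans_apply, Equiv.coe_toEmbedding, Equiv.neg_apply]
    refine and_congr_left fun hs => ?_
    constructor
    · intro h
      rcases le_total 0 s with hp | hp
      · left
        refine ⟨s.toNat, ⟨by omega, ?_⟩, by omega⟩
        by_contra hc
        have := hz s.toNat (by omega)
        rw [Int.toNat_of_nonneg hp] at this
        simp [this] at hs
      · right
        refine ⟨(-s).toNat, ⟨by omega, ?_⟩, by omega⟩
        by_contra hc
        have := hz (-s).toNat (by omega)
        rw [Int.toNat_of_nonneg (by omega), autocorr_neg] at this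
        simp [this] at hs
    · rintro (⟨x, hx, rfl⟩ | ⟨x, hx, rfl⟩) <;> omega

/-! ### Averages of products of Walsh functions -/

lemma chi_mul {f : ℕ → ℝ} (hf : ∀ i, f i * f i = 1) (P Q : Finset ℕ) :
    chi f P * chi f Q = chi f (symmDiff P Q) := by
  unfold chi
  have h1 : ∏ i ∈ P, f i = (∏ i ∈ P \ Q, f i) * ∏ i ∈ P ∩ Q, f i := by
    rw [mul_comm, prod_inter_mul_prod_sdiff]
  have h2 : ∏ i ∈ Q, f i = (∏ i ∈ Q \ P, f i) * ∏ i ∈ P ∩ Q, f i := by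
    rw [mul_comm, inter_comm, prod_inter_mul_prod_sdiff]
  have h3 : ∏ i ∈ symmDiff P Q, f i = (∏ i ∈ P \ Q, f i) * ∏ i ∈ Q \ P, f i := by
    rw [symmDiff_def, sup_eq_union, prod_union]
    exact disjoint_sdiff_sdiff
  have h4 : (∏ i ∈ P ∩ Q, f i) * ∏ i ∈ P ∩ Q, f i = 1 := by
    rw [← prod_mul_distrib]; exact prod_eq_one fun i _ => hf i
  rw [h1, h2, h3]
  linear_combination ((∏ i ∈ P \ Q, f i) * ∏ i ∈ Q \ P, f i) * h4

/-- The average over all `2 ^ ℓ` choices of signs. -/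
def avg (ℓ : ℕ) (g : (Fin ℓ → Bool) → ℝ) : ℝ := (∑ ε, g ε) / 2 ^ ℓ

/-- Orthogonality: a nontrivial Walsh function has average zero. -/
lemma avg_chi {ℓ : ℕ} {P : Finset ℕ} (hP : P ⊆ range ℓ) :
    avg ℓ (fun ε => chi (sgn ℓ ε) P) = if P = ∅ then 1 else 0 := by
  unfold avg
  split_ifs with h
  · subst h; simp [chi]
  · obtain ⟨i, hi⟩ := nonempty_iff_ne_empty.2 h
    have hil : i < ℓ := mem_range.1 (hP hi)
    have : ∑ ε : Fin ℓ → Bool, chi (sgn ℓ ε) P = 0 := by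
      -- flipping the sign at `i` reverses the sign of the Walsh function
      refine sum_involution (fun ε _ => Function.update ε ⟨i, hil⟩ (!ε ⟨i, hil⟩)) ?_ ?_ ?_ ?_
      · intro ε _
        unfold chi
        rw [← mul_prod_erase P _ hi, ← mul_prod_erase P _ hi]
        have e1 : ∏ x ∈ P.erase i, sgn ℓ (Function.update ε ⟨i, hil⟩ (!ε ⟨i, hil⟩)) x
            = ∏ x ∈ P.erase i, sgn ℓ ε x := by
          refine prod_congr rfl fun x hx => ?_
          have hne : x ≠ i := ne_of_mem_erase hx
          unfold sgn
          split_ifs <;> simp_all [Function.update]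
        have e2 : sgn ℓ (Function.update ε ⟨i, hil⟩ (!ε ⟨i, hil⟩)) i = - sgn ℓ ε i := by
          unfold sgn
          rw [dif_pos hil, dif_pos hil]
          cases ε ⟨i, hil⟩ <;> simp
        rw [e1, e2]; ring
      · intro ε _ _ hc
        have := congrFun hc ⟨i, hil⟩
        simp at this
      · intro ε _; exact mem_univ _
      · intro ε _
        simp
    rw [this, zero_div]

lemma avg_add (ℓ : ℕ) (g h : (Fin ℓ → Bool) → ℝ) :
    avg ℓ (fun ε => g ε + h ε) = avg ℓ g + avg ℓ h := by
  simp [avg, sum_add_distrib, add_div]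

lemma avg_mul_left (ℓ : ℕ) (c : ℝ) (h : (Fin ℓ → Bool) → ℝ) :
    avg ℓ (fun ε => c * h ε) = c * avg ℓ h := by
  simp [avg, ← mul_sum, mul_div_assoc]

lemma avg_sum {ι : Type*} (ℓ : ℕ) (s : Finset ι) (g : ι → (Fin ℓ → Bool) → ℝ) :
    avg ℓ (fun ε => ∑ i ∈ s, g i ε) = ∑ i ∈ s, avg ℓ (g i) := by
  simp only [avg]; rw [sum_comm, sum_div]

lemma avg_const (ℓ : ℕ) (c : ℝ) : avg ℓ (fun _ => c) = c := by
  simp [avg]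

/-- The number of pairs `(P, Q) ∈ A × B` with `P ∆ Q ∈ C`, equivalently of triples
`(P, Q, R) ∈ A × B × C` with `P ∆ Q ∆ R = ∅`. -/
def tri (A B C : Finset (Finset ℕ)) : ℕ :=
  ((A ×ˢ B).filter fun t => symmDiff t.1 t.2 ∈ C).card

/-- A product of Walsh functions has average `1` if the symmetric difference of the index sets is
empty and `0` otherwise, so the average of a product of three sums is a count of triples. -/
lemma avg_triple {ℓ : ℕ} {A B C : Finset (Finset ℕ)} (hA : ∀ P ∈ A, P ⊆ range ℓ)
    (hB : ∀ P ∈ B, P ⊆ range ℓ) (hC : ∀ P ∈ C, P ⊆ range ℓ) :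
    avg ℓ (fun ε => (∑ P ∈ A, chi (sgn ℓ ε) P) * (∑ P ∈ B, chi (sgn ℓ ε) P) *
      ∑ P ∈ C, chi (sgn ℓ ε) P) = tri A B C := by
  have h1 : ∀ ε, (∑ P ∈ A, chi (sgn ℓ ε) P) * (∑ P ∈ B, chi (sgn ℓ ε) P) *
      ∑ P ∈ C, chi (sgn ℓ ε) P = ∑ t ∈ A ×ˢ B, ∑ R ∈ C,
        chi (sgn ℓ ε) (symmDiff (symmDiff t.1 t.2) R) := by
    intro ε
    rw [sum_mul_sum, ← sum_product', sum_mul_sum]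
    refine sum_congr rfl fun t _ => sum_congr rfl fun R _ => ?_
    rw [chi_mul (sgn_sq ℓ ε), chi_mul (sgn_sq ℓ ε)]
  simp_rw [h1, avg_sum]
  rw [tri, card_filter, Nat.cast_sum]
  refine sum_congr rfl fun t ht => ?_
  rw [mem_product] at ht
  rw [Nat.cast_ite, Nat.cast_one, Nat.cast_zero, ← sum_ite_eq C (symmDiff t.1 t.2) (fun _ => (1 : ℝ))]
  refine sum_congr rfl fun R hR => ?_
  rw [avg_chi]
  · simp only [← bot_eq_empty, symmDiff_eq_bot]
  · exact (symmDiff_subset_union).trans (union_subset ((symmDiff_subset_union).trans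
      (union_subset (hA _ ht.1) (hB _ ht.2))) (hC _ hR))

lemma avg_sum_chi {ℓ : ℕ} {A : Finset (Finset ℕ)} (hA : ∀ P ∈ A, P ⊆ range ℓ)
    (hA' : ∀ P ∈ A, P ≠ ∅) : avg ℓ (fun ε => ∑ P ∈ A, chi (sgn ℓ ε) P) = 0 := by
  rw [avg_sum]
  refine sum_eq_zero fun P hP => ?_
  rw [avg_chi (hA P hP), if_neg (hA' P hP)]

lemma sum_quads (ℓ : ℕ) (f : ℕ → ℝ) : ∑ P ∈ quads ℓ, chi f P =
    ∑ t ∈ (range ℓ ×ˢ range ℓ ×ˢ range ℓ).filter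
    (fun t => 1 ≤ t.2.1 ∧ t.2.1 < t.2.2 ∧ t.1 + t.2.1 + t.2.2 < ℓ),
      f t.1 * f (t.1 + t.2.1) * f (t.1 + t.2.2) * f (t.1 + t.2.1 + t.2.2) := by
  unfold quads
  rw [sum_image]
  · refine sum_congr rfl fun t ht => ?_
    simp only [mem_filter] at ht
    unfold chi
    rw [prod_insert, prod_insert, prod_pair]
    · ring
    all_goals first | omega | (simp only [mem_insert, mem_singleton]; omega)
  · rintro ⟨x, d, e⟩ h ⟨y, d', e'⟩ h' heq
    simp only [coe_filter, Set.mem_ofPred_eq] at h h'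
    simp only [Finset.ext_iff, mem_insert, mem_singleton] at heq
    have a1 := heq x
    have a2 := heq (x + d)
    have a3 := heq (x + e)
    have a4 := heq (x + d + e)
    have b1 := heq y
    have b2 := heq (y + d')
    have b3 := heq (y + e')
    have b4 := heq (y + d' + e')
    have hx : x = y := by omega
    subst hx
    have hd : d = d' := by omega
    subst hd
    have : e = e' := by omega
    subst this
    rfl

lemma sum_evPairs (ℓ : ℕ) (f : ℕ → ℝ) : ∑ P ∈ evPairs ℓ, chi f P =
    ∑ t ∈ (range ℓ ×ˢ range ℓ).filter (fun t => 1 ≤ t.2 ∧ t.1 + 2 * t.2 < ℓ),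
      f t.1 * f (t.1 + 2 * t.2) := by
  unfold evPairs
  rw [sum_image]
  · refine sum_congr rfl fun t ht => ?_
    simp only [mem_filter] at ht
    unfold chi
    rw [prod_pair]
    omega
  · rintro ⟨x, d⟩ h ⟨y, d'⟩ h' heq
    simp only [coe_filter, Set.mem_ofPred_eq] at h h'
    simp only [Finset.ext_iff, mem_insert, mem_singleton] at heq
    have a1 := heq x
    have a2 := heq (x + 2 * d)
    have b1 := heq y
    have b2 := heq (y + 2 * d')
    have hx : x = y := by omega
    subst hx
    have hd : d = d' := by omega
    subst hd
    rfl

/-! ### Walsh expansion of the demerit factor -/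

lemma sq_sum_range (h : ℕ → ℝ) (n : ℕ) : (∑ x ∈ range n, h x) ^ 2 =
    ∑ x ∈ range n, h x * h x + 2 * ∑ y ∈ range n, ∑ x ∈ range y, h x * h y := by
  induction n with
  | zero => simp
  | succ n ih =>
    simp only [sum_range_succ _ n]
    rw [add_sq, ih, ← sum_mul]
    ring

/-- Walsh expansion of the off-peak autocorrelation energy: a constant plus `8` times the sum over
quadruples plus `4` times the sum over even pairs. A quadruple arises from the two shifts `d` and
`e`; an even pair arises from products `f x * f (x + d) * f (x + d) * f (x + 2 * d)`. -/
lemma sum_sq_autocorr (ℓ : ℕ) {f : ℕ → ℝ} (hf : ∀ i, f i * f i = 1) :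
    2 * ∑ d ∈ Ico 1 ℓ, (∑ x ∈ range (ℓ - d), f x * f (x + d)) ^ 2 =
      2 * ∑ d ∈ Ico 1 ℓ, ((ℓ - d : ℕ) : ℝ) +
        (8 * ∑ P ∈ quads ℓ, chi f P + 4 * ∑ P ∈ evPairs ℓ, chi f P) := by
  rw [sum_quads, sum_evPairs]
  set A := ∑ t ∈ (range ℓ ×ˢ range ℓ ×ˢ range ℓ).filter
    (fun t => 1 ≤ t.2.1 ∧ t.2.1 < t.2.2 ∧ t.1 + t.2.1 + t.2.2 < ℓ),
      f t.1 * f (t.1 + t.2.1) * f (t.1 + t.2.2) * f (t.1 + t.2.1 + t.2.2) with hA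
  set B := ∑ t ∈ (range ℓ ×ˢ range ℓ).filter (fun t => 1 ≤ t.2 ∧ t.1 + 2 * t.2 < ℓ),
      f t.1 * f (t.1 + 2 * t.2) with hB
  have key : ∑ d ∈ Ico 1 ℓ, ∑ y ∈ range (ℓ - d), ∑ x ∈ range y,
      (f x * f (x + d)) * (f y * f (y + d)) = 2 * A + B := by
    have e1 : ∑ d ∈ Ico 1 ℓ, ∑ y ∈ range (ℓ - d), ∑ x ∈ range y,
      (f x * f (x + d)) * (f y * f (y + d)) =
      ∑ t ∈ (range ℓ ×ˢ range ℓ ×ˢ range ℓ).filter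
        (fun t => 1 ≤ t.2.1 ∧ 1 ≤ t.2.2 ∧ t.1 + t.2.1 + t.2.2 < ℓ),
        f t.1 * f (t.1 + t.2.1) * f (t.1 + t.2.2) * f (t.1 + t.2.1 + t.2.2) := by
      simp_rw [sum_sigma']
      refine sum_bij' (fun s _ => (s.2.2, s.1, s.2.1 - s.2.2))
        (fun t _ => ⟨t.2.1, t.1 + t.2.2, t.1⟩) ?_ ?_ ?_ ?_ ?_
      · rintro ⟨d, y, x⟩ h
        simp only [mem_sigma, mem_Ico, mem_range, mem_filter, mem_product] at h ⊢
        omega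
      · rintro ⟨x, d, e⟩ h
        simp only [mem_sigma, mem_Ico, mem_range, mem_filter, mem_product] at h ⊢
        omega
      · rintro ⟨d, y, x⟩ h
        simp only [mem_sigma, mem_Ico, mem_range] at h
        have : x + (y - x) = y := by omega
        simp [this]
      · rintro ⟨x, d, e⟩ h
        simp
      · rintro ⟨d, y, x⟩ h
        simp only [mem_sigma, mem_Ico, mem_range] at h
        have h1 : x + (y - x) = y := by omega
        have h2 : x + d + (y - x) = y + d := by omega
        simp only [h1, h2]
        ring
    rw [e1, ← sum_filter_add_sum_filter_not _ (fun t : ℕ × ℕ × ℕ => t.2.1 < t.2.2),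
      ← sum_filter_add_sum_filter_not (filter (fun t : ℕ × ℕ × ℕ => ¬ t.2.1 < t.2.2) _)
        (fun t : ℕ × ℕ × ℕ => t.2.2 < t.2.1)]
    simp only [filter_filter]
    rw [two_mul, add_assoc]
    congr 1
    · rw [hA]
      refine sum_congr (filter_congr fun t _ => ?_) fun _ _ => rfl
      omega
    congr 1
    · rw [hA]
      refine sum_bij' (fun t _ => (t.1, t.2.2, t.2.1)) (fun t _ => (t.1, t.2.2, t.2.1)) ?_ ?_ ?_ ?_ ?_
      · rintro ⟨x, d, e⟩ h
        simp only [mem_range, mem_filter, mem_product] at h ⊢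
        omega
      · rintro ⟨x, d, e⟩ h
        simp only [mem_range, mem_filter, mem_product] at h ⊢
        omega
      · rintro ⟨x, d, e⟩ h; rfl
      · rintro ⟨x, d, e⟩ h; rfl
      · rintro ⟨x, d, e⟩ h
        have : x + e + d = x + d + e := by omega
        simp only [this]
        ring
    · rw [hB]
      refine sum_bij' (fun t _ => (t.1, t.2.1)) (fun t _ => (t.1, t.2, t.2)) ?_ ?_ ?_ ?_ ?_
      · rintro ⟨x, d, e⟩ h
        simp only [mem_range, mem_filter, mem_product] at h ⊢
        omega
      · rintro ⟨x, d⟩ h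
        simp only [mem_range, mem_filter, mem_product] at h ⊢
        omega
      · rintro ⟨x, d, e⟩ h
        simp only [mem_range, mem_filter, mem_product] at h
        have : d = e := by omega
        simp [this]
      · rintro ⟨x, d⟩ h; rfl
      · rintro ⟨x, d, e⟩ h
        simp only [mem_range, mem_filter, mem_product] at h
        have : d = e := by omega
        subst this
        have h2 : x + 2 * d = x + d + d := by omega
        simp only [h2]
        linear_combination f x * f (x + d + d) * hf (x + d)
  have e2 : ∀ d, (∑ x ∈ range (ℓ - d), f x * f (x + d)) ^ 2 = ((ℓ - d : ℕ) : ℝ) +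
      2 * ∑ y ∈ range (ℓ - d), ∑ x ∈ range y, (f x * f (x + d)) * (f y * f (y + d)) := by
    intro d
    rw [sq_sum_range (fun x => f x * f (x + d))]
    congr 1
    have : ∀ x, (f x * f (x + d)) * (f x * f (x + d)) = 1 := fun x => by
      linear_combination f (x + d) * f (x + d) * hf x + hf (x + d)
    simp [this]
  simp_rw [e2]
  rw [sum_add_distrib, ← mul_sum, key]
  ring

/-- Expanding `(8 A + 4 B) ^ 3`, with `A` and `B` the sums over quadruples and over even pairs, and
averaging turns the third central moment into four counts of triples. -/
lemma centralMoment_eq (ℓ : ℕ) : centralMoment 3 ℓ ADF =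
    (512 * (tri (quads ℓ) (quads ℓ) (quads ℓ) : ℝ) + 768 * tri (quads ℓ) (quads ℓ) (evPairs ℓ)
      + 384 * tri (evPairs ℓ) (evPairs ℓ) (quads ℓ)
      + 64 * tri (evPairs ℓ) (evPairs ℓ) (evPairs ℓ)) / (ℓ : ℝ) ^ 6 := by
  set c : ℝ := 2 * ∑ d ∈ Ico 1 ℓ, ((ℓ - d : ℕ) : ℝ) with hc
  set A : (Fin ℓ → Bool) → ℝ := fun ε => ∑ P ∈ quads ℓ, chi (sgn ℓ ε) P with hA
  set B : (Fin ℓ → Bool) → ℝ := fun ε => ∑ P ∈ evPairs ℓ, chi (sgn ℓ ε) P with hB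
  have hADF : ∀ ε, ADF (seqOf ℓ ε) = ((ℓ : ℝ) ^ 2)⁻¹ * (c + (8 * A ε + 4 * B ε)) := by
    intro ε
    rw [ADF_seqOf, sum_sq_autocorr ℓ (sgn_sq ℓ ε), div_eq_inv_mul]
  have hq : ∀ P ∈ quads ℓ, P ⊆ range ℓ := fun P h => quads_subset h
  have hp : ∀ P ∈ evPairs ℓ, P ⊆ range ℓ := fun P h => evPairs_subset h
  have hmean : expect ℓ ADF = ((ℓ : ℝ) ^ 2)⁻¹ * c := by
    change avg ℓ (fun ε => ADF (seqOf ℓ ε)) = _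
    simp_rw [hADF]
    have hA0 : avg ℓ A = 0 := by
      refine avg_sum_chi hq ?_
      rintro P h rfl; simpa using quads_card h
    have hB0 : avg ℓ B = 0 := by
      refine avg_sum_chi hp ?_
      rintro P h rfl; simpa using evPairs_card h
    rw [avg_mul_left, avg_add, avg_const, avg_add, avg_mul_left ℓ 8 A, avg_mul_left ℓ 4 B,
      hA0, hB0]
    ring
  change avg ℓ (fun ε => (ADF (seqOf ℓ ε) - expect ℓ ADF) ^ 3) = _
  have h3 : ∀ ε, (ADF (seqOf ℓ ε) - expect ℓ ADF) ^ 3 = ((ℓ : ℝ) ^ 6)⁻¹ *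
      (512 * (A ε * A ε * A ε) + 768 * (A ε * A ε * B ε) + 384 * (B ε * B ε * A ε)
        + 64 * (B ε * B ε * B ε)) := by
    intro ε
    rw [hADF, hmean]
    have : ((ℓ : ℝ) ^ 6)⁻¹ = (((ℓ : ℝ) ^ 2)⁻¹) ^ 3 := by
      rw [← inv_pow, ← inv_pow, ← pow_mul]
    rw [this]; ring
  simp_rw [h3]
  rw [avg_mul_left, avg_add, avg_add, avg_add, avg_mul_left, avg_mul_left, avg_mul_left,
    avg_mul_left, avg_triple hq hq hq, avg_triple hq hq hp, avg_triple hp hp hq,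
    avg_triple hp hp hp]
  ring

/-! ### Triples of quadruples as triangles in a graph on pairs -/

/-- The two-element set `{x, x + d}` encoded by `(x, d)`. -/
def pr (X : ℕ × ℕ) : Finset ℕ := {X.1, X.1 + X.2}

/-- Two codes `(x, d)` and `(y, e)` are adjacent when the pairs are disjoint and either have the same
length `d = e`, or are distinct with the same midpoint `2 * x + d = 2 * y + e`. -/
def adj (X Y : ℕ × ℕ) : Prop :=
  (X.2 = Y.2 ∧ X.1 ≠ Y.1 ∧ X.1 ≠ Y.1 + X.2 ∧ Y.1 ≠ X.1 + X.2) ∨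
    (2 * X.1 + X.2 = 2 * Y.1 + Y.2 ∧ X.1 ≠ Y.1)

instance (X Y : ℕ × ℕ) : Decidable (adj X Y) := by unfold adj; infer_instance

/-- Codes `(x, d)` of the two-element subsets of `{0, …, ℓ - 1}`. -/
def idx (ℓ : ℕ) : Finset (ℕ × ℕ) :=
  (range ℓ ×ˢ range ℓ).filter fun X => 1 ≤ X.2 ∧ X.1 + X.2 < ℓ

lemma mem_idx {ℓ : ℕ} {X : ℕ × ℕ} : X ∈ idx ℓ ↔ 1 ≤ X.2 ∧ X.1 + X.2 < ℓ := by
  simp only [idx, mem_filter, mem_product, mem_range]; omega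

lemma mem_pr {X : ℕ × ℕ} {i : ℕ} : i ∈ pr X ↔ i = X.1 ∨ i = X.1 + X.2 := by
  simp [pr]

lemma pr_injOn {X Y : ℕ × ℕ} (hX : 1 ≤ X.2) (hY : 1 ≤ Y.2) (h : pr X = pr Y) : X = Y := by
  simp only [Finset.ext_iff, mem_pr] at h
  have a1 := h X.1
  have a2 := h (X.1 + X.2)
  have b1 := h Y.1
  have b2 := h (Y.1 + Y.2)
  exact Prod.ext (by omega) (by omega)

lemma exists_pr {ℓ : ℕ} {P : Finset ℕ} (hP : P ⊆ range ℓ) (hc : P.card = 2) :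
    ∃ X ∈ idx ℓ, pr X = P := by
  obtain ⟨a, b, hab, rfl⟩ := card_eq_two.1 hc
  have ha : a < ℓ := mem_range.1 (hP (by simp))
  have hb : b < ℓ := mem_range.1 (hP (by simp))
  rcases lt_or_gt_of_ne hab with h | h
  · refine ⟨(a, b - a), mem_idx.2 ⟨by simp only; omega, by simp only; omega⟩, ?_⟩
    have : a + (b - a) = b := by omega
    simp [pr, this]
  · refine ⟨(b, a - b), mem_idx.2 ⟨by simp only; omega, by simp only; omega⟩, ?_⟩
    have : b + (a - b) = a := by omega
    simp [pr, this, pair_comm]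

/-- A union of two pairs is a quadruple `a + d = b + c` exactly when the pairs are either
`{a, b}, {c, d}` or `{a, c}, {b, d}` (equal length), or `{a, d}, {b, c}` (equal midpoint). -/
lemma union_mem_quads_iff {ℓ : ℕ} {X Y : ℕ × ℕ} (hX : X ∈ idx ℓ) (hY : Y ∈ idx ℓ) :
    pr X ∪ pr Y ∈ quads ℓ ↔ adj X Y := by
  obtain ⟨x, d⟩ := X
  obtain ⟨y, e⟩ := Y
  rw [mem_idx] at hX hY
  simp only at hX hY
  rw [mem_quads]
  simp only [Finset.ext_iff, mem_union, mem_pr, adj, mem_insert, mem_singleton]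
  constructor
  · rintro ⟨u, a, b, h1, h2, h3, h⟩
    have a1 := (h u).2 (by simp)
    have a2 := (h (u + a)).2 (by simp)
    have a3 := (h (u + b)).2 (by simp)
    have a4 := (h (u + a + b)).2 (by simp)
    omega
  · rintro (⟨rfl, h1, h2, h3⟩ | ⟨h1, h2⟩)
    · rcases lt_or_gt_of_ne h1 with h | h
      · rcases lt_or_ge (y - x) d with h' | h'
        · exact ⟨x, y - x, d, by omega, by omega, by omega, fun i => by omega⟩
        · exact ⟨x, d, y - x, by omega, by omega, by omega, fun i => by omega⟩
      · rcases lt_or_ge (x - y) d with h' | h'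
        · exact ⟨y, x - y, d, by omega, by omega, by omega, fun i => by omega⟩
        · exact ⟨y, d, x - y, by omega, by omega, by omega, fun i => by omega⟩
    · rcases lt_or_gt_of_ne h2 with h | h
      · exact ⟨x, y - x, y + e - x, by omega, by omega, by omega, fun i => by omega⟩
      · exact ⟨y, x - y, x + d - y, by omega, by omega, by omega, fun i => by omega⟩

lemma adj_disjoint {X Y : ℕ × ℕ} (hX : 1 ≤ X.2) (hY : 1 ≤ Y.2) (h : adj X Y) :
    Disjoint (pr X) (pr Y) := by
  rw [disjoint_left]
  intro i hi hj
  rw [mem_pr] at hi hj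
  unfold adj at h
  omega

lemma card_pr {X : ℕ × ℕ} (hX : 1 ≤ X.2) : (pr X).card = 2 := by
  rw [pr, card_pair]; omega

lemma card_symmDiff (P Q : Finset ℕ) :
    (symmDiff P Q).card = (P \ Q).card + (Q \ P).card := by
  rw [symmDiff_def, sup_eq_union, card_union_of_disjoint disjoint_sdiff_sdiff]

lemma set_facts {X Y Z : Finset ℕ} (h1 : Disjoint X Y) (h2 : Disjoint X Z) (h3 : Disjoint Y Z) :
    symmDiff (X ∪ Y) (X ∪ Z) = Y ∪ Z ∧ (X ∪ Y) ∩ (X ∪ Z) = X ∧ (X ∪ Y) \ (X ∪ Z) = Y ∧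
      (X ∪ Z) \ (X ∪ Y) = Z := by
  rw [disjoint_left] at h1 h2 h3
  refine ⟨?_, ?_, ?_, ?_⟩ <;> ext i <;> have a1 := @h1 i <;> have a2 := @h2 i <;>
    have a3 := @h3 i <;> simp only [mem_symmDiff, mem_union, mem_inter, Finset.mem_sdiff] <;> tauto

/-- If `P`, `Q` and `P ∆ Q` all have four elements then `P ∩ Q`, `P \ Q` and `Q \ P` are pairs, so
triples of quadruples correspond to ordered triangles in the adjacency graph of pairs. -/
lemma tri_quads (ℓ : ℕ) : tri (quads ℓ) (quads ℓ) (quads ℓ) =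
    ((idx ℓ ×ˢ idx ℓ ×ˢ idx ℓ).filter fun t =>
      adj t.1 t.2.1 ∧ adj t.1 t.2.2 ∧ adj t.2.1 t.2.2).card := by
  symm
  refine card_bij (fun t _ => (pr t.1 ∪ pr t.2.1, pr t.1 ∪ pr t.2.2)) ?_ ?_ ?_
  · rintro ⟨X, Y, Z⟩ h
    simp only [mem_filter, mem_product] at h ⊢
    obtain ⟨⟨hX, hY, hZ⟩, h1, h2, h3⟩ := h
    have hX' := (mem_idx.1 hX).1
    have hY' := (mem_idx.1 hY).1
    have hZ' := (mem_idx.1 hZ).1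
    rw [union_mem_quads_iff hX hY, union_mem_quads_iff hX hZ, (set_facts (adj_disjoint hX' hY' h1)
      (adj_disjoint hX' hZ' h2) (adj_disjoint hY' hZ' h3)).1, union_mem_quads_iff hY hZ]
    exact ⟨⟨h1, h2⟩, h3⟩
  · rintro ⟨X, Y, Z⟩ h ⟨X', Y', Z'⟩ h' heq
    simp only [mem_filter, mem_product, mem_idx] at h h'
    simp only [Prod.mk.injEq] at heq
    obtain ⟨⟨hX, hY, hZ⟩, h1, h2, h3⟩ := h
    obtain ⟨⟨hX', hY', hZ'⟩, h1', h2', h3'⟩ := h'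
    obtain ⟨-, f1, f2, f3⟩ := set_facts (adj_disjoint hX.1 hY.1 h1)
      (adj_disjoint hX.1 hZ.1 h2) (adj_disjoint hY.1 hZ.1 h3)
    obtain ⟨-, g1, g2, g3⟩ := set_facts (adj_disjoint hX'.1 hY'.1 h1')
      (adj_disjoint hX'.1 hZ'.1 h2') (adj_disjoint hY'.1 hZ'.1 h3')
    rw [heq.1, heq.2] at f1 f2 f3
    rw [pr_injOn hX.1 hX'.1 (f1.symm.trans g1), pr_injOn hY.1 hY'.1 (f2.symm.trans g2),
      pr_injOn hZ.1 hZ'.1 (f3.symm.trans g3)]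
  · rintro ⟨P, Q⟩ h
    simp only [mem_filter, mem_product] at h
    obtain ⟨⟨hP, hQ⟩, hR⟩ := h
    have c1 := quads_card hP
    have c2 := quads_card hQ
    have c3 := quads_card hR
    rw [card_symmDiff] at c3
    have c4 := card_sdiff_add_card_inter P Q
    have c5 := card_sdiff_add_card_inter Q P
    rw [inter_comm] at c5
    obtain ⟨X, hX, eX⟩ := exists_pr (ℓ := ℓ) (P := P ∩ Q)
      (inter_subset_left.trans (quads_subset hP)) (by omega)
    obtain ⟨Y, hY, eY⟩ := exists_pr (ℓ := ℓ) (P := P \ Q)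
      (sdiff_subset.trans (quads_subset hP)) (by omega)
    obtain ⟨Z, hZ, eZ⟩ := exists_pr (ℓ := ℓ) (P := Q \ P)
      (sdiff_subset.trans (quads_subset hQ)) (by omega)
    have e1 : pr X ∪ pr Y = P := by rw [eX, eY, union_comm, sdiff_union_inter]
    have e2 : pr X ∪ pr Z = Q := by rw [eX, eZ, union_comm, inter_comm, sdiff_union_inter]
    have e3 : pr Y ∪ pr Z = symmDiff P Q := by rw [eY, eZ, symmDiff_def, sup_eq_union]
    refine ⟨(X, Y, Z), ?_, ?_⟩
    · simp only [mem_filter, mem_product]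
      rw [← union_mem_quads_iff hX hY, ← union_mem_quads_iff hX hZ, ← union_mem_quads_iff hY hZ,
        e1, e2, e3]
      exact ⟨⟨hX, hY, hZ⟩, hP, hQ, hR⟩
    · simp only [e1, e2]

lemma mem_evPairs_iff_pr {ℓ : ℕ} {X : ℕ × ℕ} (hX : X ∈ idx ℓ) :
    pr X ∈ evPairs ℓ ↔ X.2 % 2 = 0 := by
  rw [mem_idx] at hX
  rw [mem_evPairs]
  constructor
  · rintro ⟨x, d, h1, h2, h⟩
    have : X = (x, 2 * d) := pr_injOn hX.1 (by simp only; omega) h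
    subst this
    simp
  · intro h
    refine ⟨X.1, X.2 / 2, by omega, by omega, ?_⟩
    have : 2 * (X.2 / 2) = X.2 := by omega
    rw [this]; rfl

/-- Two even pairs with a quadruple as symmetric difference are disjoint and adjacent. -/
lemma tri_pairs_quads (ℓ : ℕ) : tri (evPairs ℓ) (evPairs ℓ) (quads ℓ) =
    ((idx ℓ ×ˢ idx ℓ).filter fun t =>
      adj t.1 t.2 ∧ t.1.2 % 2 = 0 ∧ t.2.2 % 2 = 0).card := by
  symm
  refine card_bij (fun t _ => (pr t.1, pr t.2)) ?_ ?_ ?_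
  · rintro ⟨X, Y⟩ h
    simp only [mem_filter, mem_product] at h ⊢
    obtain ⟨⟨hX, hY⟩, h1, h2, h3⟩ := h
    rw [mem_evPairs_iff_pr hX, mem_evPairs_iff_pr hY, (adj_disjoint (mem_idx.1 hX).1
      (mem_idx.1 hY).1 h1).symmDiff_eq_sup, sup_eq_union, union_mem_quads_iff hX hY]
    exact ⟨⟨h2, h3⟩, h1⟩
  · rintro ⟨X, Y⟩ h ⟨X', Y'⟩ h' heq
    simp only [mem_filter, mem_product, mem_idx] at h h'
    simp only [Prod.mk.injEq] at heq
    rw [pr_injOn h.1.1.1 h'.1.1.1 heq.1, pr_injOn h.1.2.1 h'.1.2.1 heq.2]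
  · rintro ⟨P, Q⟩ h
    simp only [mem_filter, mem_product] at h
    obtain ⟨⟨hP, hQ⟩, hR⟩ := h
    obtain ⟨X, hX, rfl⟩ := exists_pr (evPairs_subset hP) (evPairs_card hP)
    obtain ⟨Y, hY, rfl⟩ := exists_pr (evPairs_subset hQ) (evPairs_card hQ)
    have c1 := evPairs_card hP
    have c2 := evPairs_card hQ
    have c3 := quads_card hR
    rw [card_symmDiff] at c3
    have c4 := card_sdiff_add_card_inter (pr X) (pr Y)
    have c5 := card_sdiff_add_card_inter (pr Y) (pr X)
    rw [inter_comm] at c5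
    have hd : Disjoint (pr X) (pr Y) := by
      rw [disjoint_iff_inter_eq_empty, ← card_eq_zero]; omega
    rw [hd.symmDiff_eq_sup, sup_eq_union, union_mem_quads_iff hX hY] at hR
    rw [mem_evPairs_iff_pr hX] at hP
    rw [mem_evPairs_iff_pr hY] at hQ
    exact ⟨(X, Y), by simp only [mem_filter, mem_product]; exact ⟨⟨hX, hY⟩, hR, hP, hQ⟩, rfl⟩

/-- The even pairs are the pairs of distinct positions of equal parity. -/
lemma pair_mem_evPairs {ℓ a b : ℕ} : ({a, b} : Finset ℕ) ∈ evPairs ℓ ↔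
    a ≠ b ∧ a % 2 = b % 2 ∧ a < ℓ ∧ b < ℓ := by
  rw [mem_evPairs]
  constructor
  · rintro ⟨x, d, h1, h2, h⟩
    simp only [Finset.ext_iff, mem_insert, mem_singleton] at h
    have a1 := h x
    have a2 := h (x + 2 * d)
    have a3 := h a
    have a4 := h b
    omega
  · rintro ⟨h1, h2, h3, h4⟩
    simp only [Finset.ext_iff, mem_insert, mem_singleton]
    rcases lt_or_gt_of_ne h1 with h | h
    · exact ⟨a, (b - a) / 2, by omega, by omega, fun i => by omega⟩
    · exact ⟨b, (a - b) / 2, by omega, by omega, fun i => by omega⟩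

lemma pair_symmDiff {a b c : ℕ} (h1 : a ≠ b) (h2 : a ≠ c) (h3 : b ≠ c) :
    symmDiff ({a, b} : Finset ℕ) {a, c} = {b, c} := by
  ext i
  simp only [mem_symmDiff, mem_insert, mem_singleton]
  omega

/-- Triples of even pairs are triangles: three distinct positions of equal parity. -/
lemma tri_pairs (ℓ : ℕ) : tri (evPairs ℓ) (evPairs ℓ) (evPairs ℓ) =
    ((range ℓ ×ˢ range ℓ ×ˢ range ℓ).filter fun t =>
      (t.1 ≠ t.2.1 ∧ t.1 ≠ t.2.2 ∧ t.2.1 ≠ t.2.2) ∧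
        t.1 % 2 = t.2.1 % 2 ∧ t.1 % 2 = t.2.2 % 2).card := by
  symm
  refine card_bij (fun t _ => ({t.1, t.2.1}, {t.1, t.2.2})) ?_ ?_ ?_
  · rintro ⟨a, b, c⟩ h
    simp only [mem_filter, mem_product, mem_range] at h ⊢
    rw [pair_symmDiff (by omega) (by omega) (by omega), pair_mem_evPairs, pair_mem_evPairs,
      pair_mem_evPairs]
    omega
  · rintro ⟨a, b, c⟩ h ⟨a', b', c'⟩ h' heq
    simp only [mem_filter, mem_product] at h h'
    simp only [Prod.mk.injEq, Finset.ext_iff, mem_insert, mem_singleton] at heq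
    obtain ⟨e1, e2⟩ := heq
    have a1 := (e1 a).1 (Or.inl rfl)
    have a2 := (e2 a).1 (Or.inl rfl)
    have haa : a = a' := by omega
    subst haa
    have b1 := (e1 b).1 (Or.inr rfl)
    have b2 := (e2 c).1 (Or.inr rfl)
    have hbb : b = b' := by omega
    have hcc : c = c' := by omega
    rw [hbb, hcc]
  · rintro ⟨P, Q⟩ h
    simp only [mem_filter, mem_product] at h
    obtain ⟨⟨hP, hQ⟩, hR⟩ := h
    have c1 := evPairs_card hP
    have c2 := evPairs_card hQ
    have c3 := evPairs_card hR
    rw [card_symmDiff] at c3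
    have c4 := card_sdiff_add_card_inter P Q
    have c5 := card_sdiff_add_card_inter Q P
    rw [inter_comm] at c5
    obtain ⟨a, ha⟩ := card_eq_one.1 (show (P ∩ Q).card = 1 by omega)
    obtain ⟨b, hb⟩ := card_eq_one.1 (show (P \ Q).card = 1 by omega)
    obtain ⟨c, hc⟩ := card_eq_one.1 (show (Q \ P).card = 1 by omega)
    have e1 : P = {a, b} := by
      rw [← sdiff_union_inter P Q, ha, hb, union_comm]; rfl
    have e2 : Q = {a, c} := by
      rw [← sdiff_union_inter Q P, inter_comm, ha, hc, union_comm]; rfl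
    have e3 : symmDiff P Q = {b, c} := by
      rw [symmDiff_def, sup_eq_union, hb, hc]; rfl
    rw [e3, pair_mem_evPairs] at hR
    rw [e1, pair_mem_evPairs] at hP
    rw [e2, pair_mem_evPairs] at hQ
    refine ⟨(a, b, c), ?_, by simp only [e1, e2]⟩
    simp only [mem_filter, mem_product, mem_range]
    omega

/-! ### The mixed counts -/

/-- Codes `(u, a, b)` of the three-element subsets `{u, u + a, u + a + b}` of `{0, …, ℓ - 1}`. -/
def triples (ℓ : ℕ) : Finset (ℕ × ℕ × ℕ) :=
  (range ℓ ×ˢ range ℓ ×ˢ range ℓ).filter fun t => 1 ≤ t.2.1 ∧ 1 ≤ t.2.2 ∧ t.1 + t.2.1 + t.2.2 < ℓ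

/-- The three-element set encoded by `(u, a, b)`. -/
def tr (t : ℕ × ℕ × ℕ) : Finset ℕ := {t.1, t.1 + t.2.1, t.1 + t.2.1 + t.2.2}

/-- The elements completing `{u, u + a, u + a + b}` to a quadruple: there are at most three,
namely `u + b` (if `a ≠ b`), `u - b` and `u + 2 * a + b` (if they lie in range). -/
def cand (ℓ : ℕ) (t : ℕ × ℕ × ℕ) : Finset ℕ :=
  (range ℓ).filter fun s =>
    (s = t.1 + t.2.2 ∧ t.2.1 ≠ t.2.2) ∨ s + t.2.2 = t.1 ∨ s = t.1 + 2 * t.2.1 + t.2.2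

lemma mem_triples {ℓ : ℕ} {t : ℕ × ℕ × ℕ} :
    t ∈ triples ℓ ↔ 1 ≤ t.2.1 ∧ 1 ≤ t.2.2 ∧ t.1 + t.2.1 + t.2.2 < ℓ := by
  simp only [triples, mem_filter, mem_product, mem_range]; omega

lemma mem_tr {t : ℕ × ℕ × ℕ} {i : ℕ} :
    i ∈ tr t ↔ i = t.1 ∨ i = t.1 + t.2.1 ∨ i = t.1 + t.2.1 + t.2.2 := by
  simp [tr]

lemma mem_cand {ℓ : ℕ} {t : ℕ × ℕ × ℕ} {s : ℕ} : s ∈ cand ℓ t ↔ s < ℓ ∧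
    ((s = t.1 + t.2.2 ∧ t.2.1 ≠ t.2.2) ∨ s + t.2.2 = t.1 ∨ s = t.1 + 2 * t.2.1 + t.2.2) := by
  simp [cand]

lemma cand_notMem {ℓ : ℕ} {t : ℕ × ℕ × ℕ} {s : ℕ} (ht : t ∈ triples ℓ) (hs : s ∈ cand ℓ t) :
    s ∉ tr t := by
  rw [mem_triples] at ht
  rw [mem_cand] at hs
  rw [mem_tr]
  omega

lemma card_tr {ℓ : ℕ} {t : ℕ × ℕ × ℕ} (ht : t ∈ triples ℓ) : (tr t).card = 3 := by
  rw [mem_triples] at ht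
  unfold tr
  rw [card_insert_of_notMem, card_pair]
  · omega
  · simp only [mem_insert, mem_singleton]; omega

lemma tr_injOn {ℓ : ℕ} {t t' : ℕ × ℕ × ℕ} (ht : t ∈ triples ℓ) (ht' : t' ∈ triples ℓ)
    (h : tr t = tr t') : t = t' := by
  rw [mem_triples] at ht ht'
  simp only [Finset.ext_iff, mem_tr] at h
  have a1 := h t.1
  have a2 := h (t.1 + t.2.1)
  have a3 := h (t.1 + t.2.1 + t.2.2)
  have b1 := h t'.1
  have b2 := h (t'.1 + t'.2.1)
  have b3 := h (t'.1 + t'.2.1 + t'.2.2)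
  exact Prod.ext (by omega) (Prod.ext (by omega) (by omega))

lemma exists_tr {ℓ : ℕ} {R : Finset ℕ} (hR : R ⊆ range ℓ) (hc : R.card = 3) :
    ∃ t ∈ triples ℓ, tr t = R := by
  obtain ⟨x, y, z, hxy, hxz, hyz, rfl⟩ := card_eq_three.1 hc
  have hx : x < ℓ := mem_range.1 (hR (by simp))
  have hy : y < ℓ := mem_range.1 (hR (by simp))
  have hz : z < ℓ := mem_range.1 (hR (by simp))
  obtain ⟨u, hu⟩ : ∃ u, u = min x (min y z) := ⟨_, rfl⟩
  obtain ⟨w, hw⟩ : ∃ w, w = max x (max y z) := ⟨_, rfl⟩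
  refine ⟨(u, x + y + z - u - w - u, w - (x + y + z - u - w)), ?_, ?_⟩
  · rw [mem_triples]; simp only; omega
  · ext i
    rw [mem_tr]
    simp only [mem_insert, mem_singleton]
    omega

lemma insert_mem_quads_iff {ℓ : ℕ} {t : ℕ × ℕ × ℕ} {s : ℕ} (ht : t ∈ triples ℓ)
    (hs : s ∉ tr t) : insert s (tr t) ∈ quads ℓ ↔ s ∈ cand ℓ t := by
  obtain ⟨u, a, b⟩ := t
  rw [mem_triples] at ht
  rw [mem_tr] at hs
  rw [mem_quads, mem_cand]
  simp only [Finset.ext_iff, mem_insert, mem_singleton, mem_tr] at *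
  constructor
  · rintro ⟨x, d, e, h1, h2, h3, h⟩
    have a1 := (h s).1 (by simp)
    have a2 := (h u).1 (by simp)
    have a3 := (h (u + a)).1 (by simp)
    have a4 := (h (u + a + b)).1 (by simp)
    omega
  · rintro ⟨h1, (⟨h2, h3⟩ | h2 | h2)⟩
    · rcases lt_or_gt_of_ne h3 with h | h
      · exact ⟨u, a, b, by omega, by omega, by omega, fun i => by omega⟩
      · exact ⟨u, b, a, by omega, by omega, by omega, fun i => by omega⟩
    · exact ⟨s, b, a + b, by omega, by omega, by omega, fun i => by omega⟩
    · exact ⟨u, a, a + b, by omega, by omega, by omega, fun i => by omega⟩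

lemma insert_facts {R : Finset ℕ} {s r : ℕ} (hs : s ∉ R) (hr : r ∉ R) (h : s ≠ r) :
    symmDiff (insert s R) (insert r R) = {s, r} ∧ insert s R ∩ insert r R = R ∧
      insert s R \ insert r R = {s} ∧ insert r R \ insert s R = {r} := by
  refine ⟨?_, ?_, ?_, ?_⟩ <;> ext i <;>
    simp only [mem_symmDiff, mem_insert, mem_inter, Finset.mem_sdiff, mem_singleton] <;>
    by_cases h1 : i = s <;> by_cases h2 : i = r <;> simp_all

/-- The candidates completing a given triple all have the same parity. -/
lemma cand_parity {ℓ : ℕ} {t : ℕ × ℕ × ℕ} {s r : ℕ} (hs : s ∈ cand ℓ t) (hr : r ∈ cand ℓ t)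
    (h : s ≠ r) : ({s, r} : Finset ℕ) ∈ evPairs ℓ := by
  rw [mem_cand] at hs hr
  rw [pair_mem_evPairs]
  omega

/-- Two quadruples differing by an even pair share three elements; conversely any two different
completions of the same three-element set qualify, by `cand_parity`. -/
lemma tri_quads_pairs (ℓ : ℕ) : tri (quads ℓ) (quads ℓ) (evPairs ℓ) =
    ∑ t ∈ triples ℓ, (cand ℓ t).offDiag.card := by
  rw [← card_sigma]
  symm
  refine card_bij (fun p _ => (insert p.2.1 (tr p.1), insert p.2.2 (tr p.1))) ?_ ?_ ?_
  · rintro ⟨t, s, r⟩ h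
    simp only [mem_filter, mem_product, mem_sigma, mem_offDiag] at h ⊢
    obtain ⟨ht, hs, hr, hsr⟩ := h
    have hs' := cand_notMem ht hs
    have hr' := cand_notMem ht hr
    rw [insert_mem_quads_iff ht hs', insert_mem_quads_iff ht hr', (insert_facts hs' hr' hsr).1]
    exact ⟨⟨hs, hr⟩, cand_parity hs hr hsr⟩
  · rintro ⟨t, s, r⟩ h ⟨t', s', r'⟩ h' heq
    simp only [mem_sigma, mem_offDiag] at h h'
    simp only [Prod.mk.injEq] at heq
    obtain ⟨ht, hs, hr, hsr⟩ := h
    obtain ⟨ht', hs', hr', hsr'⟩ := h'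
    obtain ⟨-, f1, f2, f3⟩ := insert_facts (cand_notMem ht hs) (cand_notMem ht hr) hsr
    obtain ⟨-, g1, g2, g3⟩ := insert_facts (cand_notMem ht' hs') (cand_notMem ht' hr') hsr'
    rw [heq.1, heq.2] at f1 f2 f3
    have e1 := tr_injOn ht ht' (f1.symm.trans g1)
    have e2 := singleton_injective (f2.symm.trans g2)
    have e3 := singleton_injective (f3.symm.trans g3)
    rw [e1, e2, e3]
  · rintro ⟨P, Q⟩ h
    simp only [mem_filter, mem_product] at h
    obtain ⟨⟨hP, hQ⟩, hR⟩ := h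
    have c1 := quads_card hP
    have c2 := quads_card hQ
    have c3 := evPairs_card hR
    rw [card_symmDiff] at c3
    have c4 := card_sdiff_add_card_inter P Q
    have c5 := card_sdiff_add_card_inter Q P
    rw [inter_comm] at c5
    obtain ⟨t, ht, ha⟩ := exists_tr (ℓ := ℓ) (R := P ∩ Q)
      (inter_subset_left.trans (quads_subset hP)) (by omega)
    obtain ⟨s, hs⟩ := card_eq_one.1 (show (P \ Q).card = 1 by omega)
    obtain ⟨r, hr⟩ := card_eq_one.1 (show (Q \ P).card = 1 by omega)
    have e1 : insert s (tr t) = P := by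
      rw [ha, insert_eq, ← hs, sdiff_union_inter P Q]
    have e2 : insert r (tr t) = Q := by
      rw [ha, insert_eq, ← hr, inter_comm, sdiff_union_inter Q P]
    have hs1 : s ∈ P \ Q := by rw [hs]; exact mem_singleton_self s
    have hr1 : r ∈ Q \ P := by rw [hr]; exact mem_singleton_self r
    rw [Finset.mem_sdiff] at hs1 hr1
    have hs' : s ∉ tr t := by rw [ha, mem_inter]; exact fun h => hs1.2 h.2
    have hr' : r ∉ tr t := by rw [ha, mem_inter]; exact fun h => hr1.2 h.1
    refine ⟨⟨t, s, r⟩, ?_, by simp only [e1, e2]⟩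
    simp only [mem_sigma, mem_offDiag]
    rw [← insert_mem_quads_iff ht hs', ← insert_mem_quads_iff ht hr', e1, e2]
    refine ⟨ht, hP, hQ, ?_⟩
    rintro rfl
    exact hs1.2 hr1.1

/-! ### Splitting by common length and common midpoint -/

/-- Ordered triples of distinct elements of `s`. -/
def distinct3 (s : Finset ℕ) : Finset (ℕ × ℕ × ℕ) :=
  (s ×ˢ s ×ˢ s).filter fun t => t.1 ≠ t.2.1 ∧ t.1 ≠ t.2.2 ∧ t.2.1 ≠ t.2.2

/-- Ordered triples in `{0, …, n - 1}` such that no two entries are equal or at distance `d`, i.e.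
the pairs of length `d` based there are pairwise disjoint. -/
def good3 (n d : ℕ) : Finset (ℕ × ℕ × ℕ) :=
  (range n ×ˢ range n ×ˢ range n).filter fun t =>
    (t.1 ≠ t.2.1 ∧ t.1 ≠ t.2.1 + d ∧ t.2.1 ≠ t.1 + d) ∧
    (t.1 ≠ t.2.2 ∧ t.1 ≠ t.2.2 + d ∧ t.2.2 ≠ t.1 + d) ∧
    (t.2.1 ≠ t.2.2 ∧ t.2.1 ≠ t.2.2 + d ∧ t.2.2 ≠ t.2.1 + d)

/-- Ordered pairs in `{0, …, n - 1}` whose entries are neither equal nor at distance `d`. -/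
def good2 (n d : ℕ) : Finset (ℕ × ℕ) :=
  (range n ×ˢ range n).filter fun t => t.1 ≠ t.2 ∧ t.1 ≠ t.2 + d ∧ t.2 ≠ t.1 + d

lemma card_offDiag_real (s : Finset ℕ) : (s.offDiag.card : ℝ) = s.card * (s.card - 1) := by
  rw [offDiag_card, Nat.cast_sub (Nat.le_mul_self _)]
  push_cast; ring

lemma card_distinct3 (s : Finset ℕ) :
    ((distinct3 s).card : ℝ) = s.card * (s.card - 1) * (s.card - 2) := by
  have h : (distinct3 s).card = (s.offDiag.sigma fun p => (s.erase p.1).erase p.2).card := by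
    refine card_bij' (fun t _ => ⟨(t.1, t.2.1), t.2.2⟩) (fun t _ => (t.1.1, t.1.2, t.2)) ?_ ?_ ?_ ?_
    · rintro ⟨x, y, z⟩ h
      simp only [distinct3, mem_filter, mem_product, mem_sigma, mem_offDiag, mem_erase] at h ⊢
      grind
    · rintro ⟨⟨x, y⟩, z⟩ h
      simp only [distinct3, mem_filter, mem_product, mem_sigma, mem_offDiag, mem_erase] at h ⊢
      grind
    · rintro ⟨x, y, z⟩ _; rfl
    · rintro ⟨⟨x, y⟩, z⟩ _; rfl
  rw [h, card_sigma, ← card_offDiag_real]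
  push_cast
  rw [← nsmul_eq_mul, ← sum_const]
  refine sum_congr rfl fun p hp => ?_
  rw [mem_offDiag] at hp
  have hc : ({p.1, p.2} : Finset ℕ).card ≤ s.card := card_le_card (by
    intro i hi
    simp only [mem_insert, mem_singleton] at hi
    rcases hi with rfl | rfl
    · exact hp.1
    · exact hp.2.1)
  rw [card_pair hp.2.2] at hc
  rw [card_erase_of_mem (mem_erase.2 ⟨hp.2.2.symm, hp.2.1⟩), card_erase_of_mem hp.1, Nat.sub_sub,
    Nat.cast_sub hc]
  norm_num

/-- The edges of a triangle of pairwise disjoint pairs are all of the equal-length type or all of the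
equal-midpoint type. For length `d` the base points range over `{0, …, ℓ - d - 1}`; for midpoint
`m / 2` they range over `[m + 1 - ℓ, (m + 1) / 2)`. -/
lemma tri_quads_sum (ℓ : ℕ) : tri (quads ℓ) (quads ℓ) (quads ℓ) =
    ∑ d ∈ Ico 1 ℓ, (good3 (ℓ - d) d).card +
      ∑ m ∈ range (2 * ℓ), (distinct3 (Ico (m + 1 - ℓ) ((m + 1) / 2))).card := by
  rw [tri_quads, ← card_sigma, ← card_sigma,
    ← card_filter_add_card_filter_not (fun t : (ℕ × ℕ) × (ℕ × ℕ) × (ℕ × ℕ) =>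
      t.1.2 = t.2.1.2 ∧ t.1.2 = t.2.2.2)]
  congr 1
  · refine card_bij' (fun t _ => ⟨t.1.2, t.1.1, t.2.1.1, t.2.2.1⟩)
      (fun t _ => ((t.2.1, t.1), (t.2.2.1, t.1), (t.2.2.2, t.1))) ?_ ?_ ?_ ?_
    · rintro ⟨⟨x, d⟩, ⟨y, e⟩, ⟨z, f⟩⟩ h
      simp only [mem_filter, mem_product, mem_idx, mem_sigma, mem_Ico, good3, mem_range] at h ⊢
      simp only [adj] at h ⊢
      obtain ⟨⟨h1, h2, h3, h4⟩, h5, h6⟩ := h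
      subst h5 h6
      omega
    · rintro ⟨d, x, y, z⟩ h
      simp only [mem_filter, mem_product, mem_idx, mem_sigma, mem_Ico, good3, mem_range] at h ⊢
      simp only [adj] at h ⊢
      obtain ⟨h1, ⟨h2, h3, h4⟩, h5, h6, h7⟩ := h
      exact ⟨⟨⟨by omega, by omega, by omega⟩, Or.inl ⟨trivial, h5⟩, Or.inl ⟨trivial, h6⟩, Or.inl ⟨trivial, h7⟩⟩,
        trivial, trivial⟩
    · rintro ⟨⟨x, d⟩, ⟨y, e⟩, ⟨z, f⟩⟩ h
      simp only [mem_filter] at h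
      obtain ⟨-, h5, h6⟩ := h
      subst h5 h6
      rfl
    · rintro ⟨d, x, y, z⟩ h
      rfl
  · refine card_bij' (fun t _ => ⟨2 * t.1.1 + t.1.2, t.1.1, t.2.1.1, t.2.2.1⟩)
      (fun t _ => ((t.2.1, t.1 - 2 * t.2.1), (t.2.2.1, t.1 - 2 * t.2.2.1),
        (t.2.2.2, t.1 - 2 * t.2.2.2))) ?_ ?_ ?_ ?_
    · rintro ⟨⟨x, d⟩, ⟨y, e⟩, ⟨z, f⟩⟩ h
      simp only [mem_filter, mem_product, mem_idx, mem_sigma, mem_Ico, distinct3,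
        mem_range] at h ⊢
      simp only [adj] at h ⊢
      obtain ⟨⟨h1, h2, h3, h4⟩, h5⟩ := h
      omega
    · rintro ⟨m, x, y, z⟩ h
      simp only [mem_filter, mem_product, mem_idx, mem_sigma, mem_Ico, distinct3,
        mem_range] at h ⊢
      simp only [adj] at h ⊢
      obtain ⟨h1, ⟨h2, h3, h4⟩, h5, h6, h7⟩ := h
      exact ⟨⟨⟨by omega, by omega, by omega⟩, Or.inr ⟨by omega, h5⟩, Or.inr ⟨by omega, h6⟩,
        Or.inr ⟨by omega, h7⟩⟩, by omega⟩
    · rintro ⟨⟨x, d⟩, ⟨y, e⟩, ⟨z, f⟩⟩ h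
      simp only [mem_filter, mem_product, mem_idx] at h
      simp only [adj] at h
      simp only [Prod.mk.injEq, true_and]
      omega
    · rintro ⟨m, x, y, z⟩ h
      simp only [mem_filter, mem_product, mem_sigma, mem_Ico, distinct3, mem_range] at h
      have : 2 * x + (m - 2 * x) = m := by omega
      simp only [this]

/-- The adjacent even pairs, by common (even) length and by common (integral) midpoint. -/
lemma tri_pairs_quads_sum (ℓ : ℕ) : tri (evPairs ℓ) (evPairs ℓ) (quads ℓ) =
    ∑ d ∈ (Ico 1 ℓ).filter (fun d => d % 2 = 0), (good2 (ℓ - d) d).card +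
      ∑ m ∈ (range (2 * ℓ)).filter (fun m => m % 2 = 0),
        (Ico (m + 1 - ℓ) ((m + 1) / 2)).offDiag.card := by
  rw [tri_pairs_quads, ← card_sigma, ← card_sigma,
    ← card_filter_add_card_filter_not (fun t : (ℕ × ℕ) × (ℕ × ℕ) => t.1.2 = t.2.2)]
  congr 1
  · refine card_bij' (fun t _ => ⟨t.1.2, t.1.1, t.2.1⟩)
      (fun t _ => ((t.2.1, t.1), (t.2.2, t.1))) ?_ ?_ ?_ ?_
    · rintro ⟨⟨x, d⟩, ⟨y, e⟩⟩ h
      simp only [mem_filter, mem_product, mem_idx, mem_sigma, mem_Ico, good2, mem_range] at h ⊢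
      simp only [adj] at h ⊢
      omega
    · rintro ⟨d, x, y⟩ h
      simp only [mem_filter, mem_product, mem_idx, mem_sigma, mem_Ico, good2, mem_range] at h ⊢
      simp only [adj, true_and, and_true] at h ⊢
      omega
    · rintro ⟨⟨x, d⟩, ⟨y, e⟩⟩ h
      simp only [mem_filter] at h
      obtain ⟨-, h5⟩ := h
      subst h5
      rfl
    · rintro ⟨d, x, y⟩ h
      rfl
  · refine card_bij' (fun t _ => ⟨2 * t.1.1 + t.1.2, t.1.1, t.2.1⟩)
      (fun t _ => ((t.2.1, t.1 - 2 * t.2.1), (t.2.2, t.1 - 2 * t.2.2))) ?_ ?_ ?_ ?_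
    · rintro ⟨⟨x, d⟩, ⟨y, e⟩⟩ h
      simp only [mem_filter, mem_product, mem_idx, mem_sigma, mem_Ico, mem_offDiag,
        mem_range] at h ⊢
      simp only [adj] at h ⊢
      omega
    · rintro ⟨m, x, y⟩ h
      simp only [mem_filter, mem_product, mem_idx, mem_sigma, mem_Ico, mem_offDiag,
        mem_range] at h ⊢
      simp only [adj] at h ⊢
      omega
    · rintro ⟨⟨x, d⟩, ⟨y, e⟩⟩ h
      simp only [mem_filter, mem_product, mem_idx] at h
      simp only [adj] at h
      simp only [Prod.mk.injEq, true_and]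
      omega
    · rintro ⟨m, x, y⟩ h
      simp only [mem_filter, mem_sigma, mem_Ico, mem_offDiag, mem_range] at h
      have : 2 * x + (m - 2 * x) = m := by omega
      simp only [this]

lemma card_even_range (ℓ : ℕ) : ((range ℓ).filter fun x => x % 2 = 0).card = (ℓ + 1) / 2 := by
  induction ℓ with
  | zero => rfl
  | succ n ih =>
    rw [range_add_one, filter_insert]
    split_ifs with h
    · rw [card_insert_of_notMem (by simp), ih]; omega
    · rw [ih]; omega

lemma card_odd_range (ℓ : ℕ) : ((range ℓ).filter fun x => x % 2 = 1).card = ℓ / 2 := by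
  induction ℓ with
  | zero => rfl
  | succ n ih =>
    rw [range_add_one, filter_insert]
    split_ifs with h
    · rw [card_insert_of_notMem (by simp), ih]; omega
    · rw [ih]; omega

lemma tri_pairs_sum (ℓ : ℕ) : (tri (evPairs ℓ) (evPairs ℓ) (evPairs ℓ) : ℝ) =
    ((ℓ + 1) / 2 : ℕ) * (((ℓ + 1) / 2 : ℕ) - 1) * (((ℓ + 1) / 2 : ℕ) - 2) +
      (ℓ / 2 : ℕ) * ((ℓ / 2 : ℕ) - 1) * ((ℓ / 2 : ℕ) - 2) := by
  have h : tri (evPairs ℓ) (evPairs ℓ) (evPairs ℓ) =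
      (distinct3 ((range ℓ).filter fun x => x % 2 = 0)).card +
      (distinct3 ((range ℓ).filter fun x => x % 2 = 1)).card := by
    rw [tri_pairs, ← card_filter_add_card_filter_not (fun t : ℕ × ℕ × ℕ => t.1 % 2 = 0)]
    congr 2 <;>
    · ext ⟨x, y, z⟩
      simp only [mem_filter, mem_product, mem_range, distinct3]
      omega
  rw [h, Nat.cast_add, card_distinct3, card_distinct3, card_even_range, card_odd_range]

/-! ### Counting points avoiding a distance -/

/-- Indicator of `x` and `y` being equal or at distance `d`. -/
def near (d x y : ℕ) : ℝ := if x = y ∨ x = y + d ∨ y = x + d then 1 else 0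

/-- Indicator of `x = y`. -/
def delta (x y : ℕ) : ℝ := if x = y then 1 else 0

lemma near_comm (d x y : ℕ) : near d x y = near d y x := by
  unfold near
  exact if_congr (by omega) rfl rfl

lemma near_eq {d : ℕ} (hd : 1 ≤ d) (x y : ℕ) :
    near d x y = delta x y + delta x (y + d) + delta y (x + d) := by
  unfold near delta
  split_ifs <;> first | (exfalso; omega) | norm_num

/-- Among three points that are pairwise equal or at distance `d`, two coincide: distances `d`, `d`
and `d` on a line are impossible. Hence the triple product reduces to products with `delta`. -/
lemma near_triangle {d : ℕ} (hd : 1 ≤ d) (x y z : ℕ) :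
    near d x y * near d x z * near d y z = delta x y * near d x z + delta x z * near d x y +
      delta y z * near d x y - 2 * (delta x y * delta x z) := by
  unfold near delta
  split_ifs <;> first | (exfalso; omega) | norm_num

lemma sum_delta {n x : ℕ} (hx : x < n) (g : ℕ → ℝ) :
    ∑ y ∈ range n, delta x y * g y = g x := by
  simp [delta, hx]

lemma card_ge (n d : ℕ) : ∑ x ∈ range n, (if d ≤ x then (1 : ℝ) else 0) = (n - d : ℕ) := by
  rw [sum_boole]
  congr 1
  have : (range n).filter (fun x => d ≤ x) = Ico d n := by ext i; simp; omega
  rw [this, Nat.card_Ico]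

lemma card_lt (n d : ℕ) : ∑ x ∈ range n, (if x + d < n then (1 : ℝ) else 0) = (n - d : ℕ) := by
  rw [sum_boole]
  congr 1
  have : (range n).filter (fun x => x + d < n) = range (n - d) := by ext i; simp; omega
  rw [this, card_range]

lemma card_ge_lt (n d : ℕ) : ∑ x ∈ range n, (if d ≤ x then (1 : ℝ) else 0) *
    (if x + d < n then (1 : ℝ) else 0) = (n - 2 * d : ℕ) := by
  have h : ∀ x, (if d ≤ x then (1 : ℝ) else 0) * (if x + d < n then (1 : ℝ) else 0) =
      if d ≤ x ∧ x + d < n then 1 else 0 := by intro x; split_ifs <;> simp_all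
  simp_rw [h]
  rw [sum_boole]
  congr 1
  have : (range n).filter (fun x => d ≤ x ∧ x + d < n) = Ico d (n - d) := by ext i; simp; omega
  rw [this, Nat.card_Ico]; omega

lemma sum_near {n d x : ℕ} (hd : 1 ≤ d) (hx : x < n) : ∑ y ∈ range n, near d x y =
    1 + (if d ≤ x then 1 else 0) + (if x + d < n then 1 else 0) := by
  simp_rw [near_eq hd]
  rw [sum_add_distrib, sum_add_distrib]
  congr 1
  · congr 1
    · simpa using sum_delta hx (fun _ => 1)
    · split_ifs with h
      · rw [sum_eq_single (x - d)]
        · simp [delta, h]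
        · intro b _ hb; unfold delta; rw [if_neg]; omega
        · intro hc; rw [mem_range] at hc; omega
      · refine sum_eq_zero fun b _ => ?_
        unfold delta; rw [if_neg]; omega
  · simp [delta]

lemma sum_sum_near {n d : ℕ} (hd : 1 ≤ d) : ∑ x ∈ range n, ∑ y ∈ range n, near d x y =
    n + 2 * (n - d : ℕ) := by
  rw [sum_congr rfl fun x hx => sum_near hd (mem_range.1 hx), sum_add_distrib, sum_add_distrib,
    card_ge, card_lt]
  simp; ring

lemma sum_sum_near_sq {n d : ℕ} (hd : 1 ≤ d) : ∑ x ∈ range n, (∑ y ∈ range n, near d x y) ^ 2 =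
    n + 6 * (n - d : ℕ) + 2 * (n - 2 * d : ℕ) := by
  have h : ∀ x ∈ range n, (∑ y ∈ range n, near d x y) ^ 2 = 1 + 3 * (if d ≤ x then 1 else 0) +
      3 * (if x + d < n then 1 else 0) + 2 * ((if d ≤ x then (1 : ℝ) else 0) *
        (if x + d < n then (1 : ℝ) else 0)) := by
    intro x hx
    rw [sum_near hd (mem_range.1 hx)]
    split_ifs <;> norm_num
  rw [sum_congr rfl h, sum_add_distrib, sum_add_distrib, sum_add_distrib, ← mul_sum, ← mul_sum,
    ← mul_sum, card_ge, card_lt, card_ge_lt]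
  simp; ring

lemma card_good2 {n d : ℕ} (hd : 1 ≤ d) :
    ((good2 n d).card : ℝ) = n ^ 2 - n - 2 * (n - d : ℕ) := by
  unfold good2
  rw [card_filter]
  push_cast
  rw [sum_product]
  have h : ∀ x y : ℕ, (if x ≠ y ∧ x ≠ y + d ∧ y ≠ x + d then (1 : ℝ) else 0) = 1 - near d x y := by
    intro x y
    unfold near
    split_ifs <;> first | (exfalso; omega) | norm_num
  simp_rw [h, sum_sub_distrib]
  rw [sum_sum_near hd]
  simp; ring

/-- Inclusion–exclusion over the three conditions `near`; the double products give
`sum_sum_near_sq` and the triple product is resolved by `near_triangle`. -/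
lemma card_good3 {n d : ℕ} (hd : 1 ≤ d) : ((good3 n d).card : ℝ) =
    n ^ 3 - 3 * n ^ 2 + 2 * n - 6 * n * (n - d : ℕ) + 12 * (n - d : ℕ) + 6 * (n - 2 * d : ℕ) := by
  unfold good3
  rw [card_filter]
  push_cast
  simp_rw [sum_product]
  have h : ∀ x y z : ℕ, (if (x ≠ y ∧ x ≠ y + d ∧ y ≠ x + d) ∧ (x ≠ z ∧ x ≠ z + d ∧ z ≠ x + d) ∧
      (y ≠ z ∧ y ≠ z + d ∧ z ≠ y + d) then (1 : ℝ) else 0) =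
      1 - near d x y - near d x z - near d y z + near d x y * near d x z +
        near d y x * near d y z + near d z x * near d z y - (delta x y * near d x z +
          delta x z * near d x y + delta y z * near d x y - 2 * (delta x y * delta x z)) := by
    intro x y z
    rw [← near_triangle hd, near_comm d y x, near_comm d z x, near_comm d z y]
    have e : (if (x ≠ y ∧ x ≠ y + d ∧ y ≠ x + d) ∧ (x ≠ z ∧ x ≠ z + d ∧ z ≠ x + d) ∧
      (y ≠ z ∧ y ≠ z + d ∧ z ≠ y + d) then (1 : ℝ) else 0) =
      (1 - near d x y) * (1 - near d x z) * (1 - near d y z) := by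
      unfold near
      split_ifs <;> first | (exfalso; omega) | norm_num
    rw [e]; ring
  simp_rw [h, sum_sub_distrib, sum_add_distrib, sum_sub_distrib]
  have D1 := sum_sum_near (n := n) hd
  have D2 := sum_sum_near_sq (n := n) hd
  have t0 : ∑ x ∈ range n, ∑ y ∈ range n, ∑ z ∈ range n, (1 : ℝ) = n ^ 3 := by
    simp; ring
  have t1 : ∑ x ∈ range n, ∑ y ∈ range n, ∑ z ∈ range n, near d x y =
      n * (n + 2 * (n - d : ℕ)) := by
    simp_rw [sum_const, ← smul_sum]; rw [D1]; simp; ring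
  have t2 : ∑ x ∈ range n, ∑ y ∈ range n, ∑ z ∈ range n, near d x z =
      n * (n + 2 * (n - d : ℕ)) := by
    simp_rw [sum_const, ← smul_sum]; rw [D1]; simp; ring
  have t3 : ∑ x ∈ range n, ∑ y ∈ range n, ∑ z ∈ range n, near d y z =
      n * (n + 2 * (n - d : ℕ)) := by
    rw [sum_const, D1]; simp; ring
  have t4 : ∑ x ∈ range n, ∑ y ∈ range n, ∑ z ∈ range n, near d x y * near d x z =
      n + 6 * (n - d : ℕ) + 2 * (n - 2 * d : ℕ) := by
    rw [← D2]
    refine sum_congr rfl fun x _ => ?_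
    rw [sq, sum_mul_sum]
  have t5 : ∑ x ∈ range n, ∑ y ∈ range n, ∑ z ∈ range n, near d y x * near d y z =
      n + 6 * (n - d : ℕ) + 2 * (n - 2 * d : ℕ) := by
    rw [sum_comm, ← t4]
  have t6 : ∑ x ∈ range n, ∑ y ∈ range n, ∑ z ∈ range n, near d z x * near d z y =
      n + 6 * (n - d : ℕ) + 2 * (n - 2 * d : ℕ) := by
    rw [sum_congr rfl fun x _ => sum_comm, sum_comm, ← t4]
  have t7 : ∑ x ∈ range n, ∑ y ∈ range n, ∑ z ∈ range n, delta x y * near d x z =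
      n + 2 * (n - d : ℕ) := by
    rw [← D1]
    refine sum_congr rfl fun x hx => ?_
    simp_rw [← mul_sum]
    exact sum_delta (mem_range.1 hx) _
  have t8 : ∑ x ∈ range n, ∑ y ∈ range n, ∑ z ∈ range n, delta x z * near d x y =
      n + 2 * (n - d : ℕ) := by
    rw [← D1]
    refine sum_congr rfl fun x hx => sum_congr rfl fun y _ => ?_
    exact sum_delta (mem_range.1 hx) _
  have t9 : ∑ x ∈ range n, ∑ y ∈ range n, ∑ z ∈ range n, delta y z * near d x y =
      n + 2 * (n - d : ℕ) := by
    rw [← D1]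
    refine sum_congr rfl fun x hx => sum_congr rfl fun y hy => ?_
    exact sum_delta (mem_range.1 hy) _
  have t10 : ∑ x ∈ range n, ∑ y ∈ range n, ∑ z ∈ range n, 2 * (delta x y * delta x z) =
      2 * n := by
    simp_rw [← mul_sum]
    congr 1
    rw [sum_congr rfl fun x hx => (sum_delta (mem_range.1 hx) _).trans
      (by simpa using sum_delta (mem_range.1 hx) (fun _ => (1 : ℝ)))]
    simp
  rw [t0, t1, t2, t3, t4, t5, t6, t7, t8, t9, t10]
  ring

/-! ### Counting quadruples through a common triple -/

lemma card_cand {ℓ : ℕ} {t : ℕ × ℕ × ℕ} (ht : t ∈ triples ℓ) : ((cand ℓ t).card : ℝ) =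
    (if t.2.1 ≠ t.2.2 then 1 else 0) + (if t.2.2 ≤ t.1 then 1 else 0) +
      (if t.1 + 2 * t.2.1 + t.2.2 < ℓ then 1 else 0) := by
  rw [mem_triples] at ht
  obtain ⟨u, a, b⟩ := t
  simp only at ht ⊢
  have h : (cand ℓ (u, a, b)) = (if a ≠ b then {u + b} else ∅) ∪
      ((if b ≤ u then {u - b} else ∅) ∪ (if u + 2 * a + b < ℓ then {u + 2 * a + b} else ∅)) := by
    ext s
    rw [mem_cand]
    simp only [mem_union]
    split_ifs <;> simp only [mem_singleton, notMem_empty, or_false, false_or, iff_false] <;> omega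
  rw [h, card_union_of_disjoint, card_union_of_disjoint]
  · split_ifs <;> simp <;> norm_num
  · split_ifs <;> simp <;> omega
  · split_ifs <;> simp <;> omega

/-- Triples for which both `u - b` and `u + 2 * a + b` lie in range. -/
lemma sum_box1 (ℓ : ℕ) : ∑ t ∈ triples ℓ, (if t.2.2 ≤ t.1 ∧ t.1 + 2 * t.2.1 + t.2.2 < ℓ then
    (1 : ℝ) else 0) = ∑ a ∈ Ico 1 ℓ, ∑ b ∈ Ico 1 ℓ, ((ℓ - 2 * a - 2 * b : ℕ) : ℝ) := by
  rw [sum_boole]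
  have h : ∀ a b, ((ℓ - 2 * a - 2 * b : ℕ) : ℝ) = ∑ v ∈ range (ℓ - 2 * a - 2 * b), (1 : ℝ) := by
    intro a b; simp
  simp_rw [h, sum_sigma']
  simp only [sum_const, nsmul_eq_mul, mul_one]
  norm_cast
  refine card_bij' (fun t _ => ⟨t.2.1, t.2.2, t.1 - t.2.2⟩)
    (fun t _ => (t.2.2 + t.2.1, t.1, t.2.1)) ?_ ?_ ?_ ?_
  · rintro ⟨u, a, b⟩ h
    simp only [mem_filter, mem_triples, mem_sigma, mem_Ico, mem_range] at h ⊢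
    omega
  · rintro ⟨a, b, v⟩ h
    simp only [mem_filter, mem_triples, mem_sigma, mem_Ico, mem_range] at h ⊢
    omega
  · rintro ⟨u, a, b⟩ h
    simp only [mem_filter, mem_triples] at h
    simp only [Prod.mk.injEq, and_true]
    omega
  · rintro ⟨a, b, v⟩ h
    simp

/-- Triples for which both `u + b` and `u - b` are available. The diagonal `a = b` is excluded,
which accounts for the subtracted sum. -/
lemma sum_box2 (ℓ : ℕ) : ∑ t ∈ triples ℓ, (if t.2.1 ≠ t.2.2 ∧ t.2.2 ≤ t.1 then
    (1 : ℝ) else 0) = ∑ a ∈ Ico 1 ℓ, ∑ b ∈ Ico 1 ℓ, ((ℓ - a - 2 * b : ℕ) : ℝ) -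
      ∑ b ∈ Ico 1 ℓ, ((ℓ - 3 * b : ℕ) : ℝ) := by
  have h0 : ∑ b ∈ Ico 1 ℓ, ((ℓ - 3 * b : ℕ) : ℝ) =
      ∑ a ∈ Ico 1 ℓ, ∑ b ∈ Ico 1 ℓ, if a = b then ((ℓ - a - 2 * b : ℕ) : ℝ) else 0 := by
    refine sum_congr rfl fun a ha => ?_
    rw [sum_ite_eq, if_pos ha]
    congr 1; omega
  rw [h0]
  simp_rw [← sum_sub_distrib]
  have h : ∀ a b, ((ℓ - a - 2 * b : ℕ) : ℝ) - (if a = b then ((ℓ - a - 2 * b : ℕ) : ℝ) else 0) =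
      ∑ v ∈ range (if a = b then 0 else ℓ - a - 2 * b), (1 : ℝ) := by
    intro a b; split_ifs <;> simp
  simp_rw [h, sum_sigma']
  rw [sum_boole]
  simp only [sum_const, nsmul_eq_mul, mul_one]
  norm_cast
  refine card_bij' (fun t _ => ⟨t.2.1, t.2.2, t.1 - t.2.2⟩)
    (fun t _ => (t.2.2 + t.2.1, t.1, t.2.1)) ?_ ?_ ?_ ?_
  · rintro ⟨u, a, b⟩ h
    simp only [mem_filter, mem_triples, mem_sigma, mem_Ico, mem_range] at h ⊢
    rw [if_neg h.2.1]
    omega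
  · rintro ⟨a, b, v⟩ h
    simp only [mem_filter, mem_triples, mem_sigma, mem_Ico, mem_range] at h ⊢
    split_ifs at h <;> omega
  · rintro ⟨u, a, b⟩ h
    simp only [mem_filter, mem_triples] at h
    simp only [Prod.mk.injEq, and_true]
    omega
  · rintro ⟨a, b, v⟩ h
    simp

/-- The reflection `i ↦ ℓ - 1 - i` exchanges the candidates `u - b` and `u + 2 * a + b`. -/
lemma sum_box3 (ℓ : ℕ) : ∑ t ∈ triples ℓ, (if t.2.1 ≠ t.2.2 ∧ t.1 + 2 * t.2.1 + t.2.2 < ℓ then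
    (1 : ℝ) else 0) = ∑ t ∈ triples ℓ, (if t.2.1 ≠ t.2.2 ∧ t.2.2 ≤ t.1 then (1 : ℝ) else 0) := by
  rw [sum_boole, sum_boole]
  norm_cast
  refine card_bij' (fun t _ => (ℓ - 1 - t.1 - t.2.1 - t.2.2, t.2.2, t.2.1))
    (fun t _ => (ℓ - 1 - t.1 - t.2.1 - t.2.2, t.2.2, t.2.1)) ?_ ?_ ?_ ?_
  all_goals
    rintro ⟨u, a, b⟩ h
    simp only [mem_filter, mem_triples] at h ⊢
    try simp only [Prod.mk.injEq, and_true]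
    omega

lemma tri_quads_pairs_sum (ℓ : ℕ) : (tri (quads ℓ) (quads ℓ) (evPairs ℓ) : ℝ) =
    2 * ∑ a ∈ Ico 1 ℓ, ∑ b ∈ Ico 1 ℓ, ((ℓ - 2 * a - 2 * b : ℕ) : ℝ) +
    4 * (∑ a ∈ Ico 1 ℓ, ∑ b ∈ Ico 1 ℓ, ((ℓ - a - 2 * b : ℕ) : ℝ) -
      ∑ b ∈ Ico 1 ℓ, ((ℓ - 3 * b : ℕ) : ℝ)) := by
  rw [tri_quads_pairs, ← sum_box1, ← sum_box2]
  have e : ∀ x : ℝ, 4 * x = 2 * x + 2 * x := fun x => by ring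
  rw [e]
  nth_rewrite 2 [← sum_box3]
  rw [mul_sum, mul_sum, mul_sum, ← sum_add_distrib, ← sum_add_distrib]
  push_cast
  refine sum_congr rfl fun t ht => ?_
  rw [card_offDiag_real, card_cand ht]
  split_ifs <;> first | (exfalso; omega) | norm_num

/-! ### Closed forms -/

lemma sum_sub_one (ℓ : ℕ) (F : ℕ → ℝ) (hF : F 0 = 0) :
    ∑ d ∈ Ico 1 ℓ, F (ℓ - d) = ∑ i ∈ range ℓ, F i := by
  rcases Nat.eq_zero_or_pos ℓ with rfl | h
  · simp
  rw [sum_Ico_reflect F 1 (by omega : ℓ ≤ ℓ + 1), range_eq_Ico, sum_eq_sum_Ico_succ_bot h, hF,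
    zero_add]
  congr 2; omega

/-- With `ℓ = 2 * p + r`, `r < 2`, the terms with `2 * b > ℓ` vanish and the others are reversed by
`b = p - j`. -/
lemma sum_sub_two (p r : ℕ) (hr : r < 2) (F : ℕ → ℕ → ℝ) (hF : ∀ b, F b 0 = 0) :
    ∑ b ∈ Ico 1 (2 * p + r), F b (2 * p + r - 2 * b) = ∑ j ∈ range p, F (p - j) (2 * j + r) := by
  have h : Ico 1 (p + 1) ⊆ Ico 1 (2 * p + r) ∨ p = 0 := by
    rcases Nat.eq_zero_or_pos p with h | h
    · exact .inr h
    · exact .inl (Ico_subset_Ico_right (by omega))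
  rcases h with h | rfl
  · rw [← sum_subset h]
    · refine sum_nbij' (fun b => p - b) (fun j => p - j) ?_ ?_ ?_ ?_ ?_
      all_goals intro b hb; simp only [mem_Ico, mem_range] at hb ⊢
      · omega
      · omega
      · omega
      · omega
      · congr 1 <;> omega
    · intro b hb hb'
      simp only [mem_Ico] at hb hb'
      rw [Nat.sub_eq_zero_of_le (by omega), hF]
  · interval_cases r <;> simp

/-- This sum is where the residue of `ℓ` modulo `4` enters. -/
lemma sum_sub_four (q r : ℕ) (hr : r < 4) : ∑ b ∈ Ico 1 (4 * q + r), ((4 * q + r - 4 * b : ℕ) : ℝ) =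
    2 * q * (q - 1) + r * q := by
  have h1 : Ico 1 (q + 1) ⊆ Ico 1 (4 * q + r) ∨ q = 0 := by
    rcases Nat.eq_zero_or_pos q with h | h
    · exact .inr h
    · exact .inl (Ico_subset_Ico_right (by omega))
  rcases h1 with h | rfl
  · rw [← sum_subset h]
    · have h2 : ∑ b ∈ Ico 1 (q + 1), ((4 * q + r - 4 * b : ℕ) : ℝ) =
          ∑ j ∈ range q, (4 * (j : ℝ) + r) := by
        refine sum_nbij' (fun b => q - b) (fun j => q - j) ?_ ?_ ?_ ?_ ?_
        all_goals intro b hb; simp only [mem_Ico, mem_range] at hb ⊢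
        · omega
        · omega
        · omega
        · omega
        · rw [show 4 * q + r - 4 * b = 4 * (q - b) + r by omega]; push_cast; ring
      rw [h2]
      clear h h2
      induction q with
      | zero => simp
      | succ q ih => rw [sum_range_succ, ih]; push_cast; ring
    · intro b hb hb'
      simp only [mem_Ico] at hb hb'
      rw [Nat.sub_eq_zero_of_le (by omega), Nat.cast_zero]
  · simp only [mul_zero, zero_add, Nat.cast_zero, zero_mul, add_zero]
    refine sum_eq_zero fun b hb => ?_
    rw [mem_Ico] at hb
    rw [Nat.sub_eq_zero_of_le (by omega), Nat.cast_zero]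

lemma sum_sub_self {n M : ℕ} (h : n ≤ M) :
    ∑ a ∈ Ico 1 M, ((n - a : ℕ) : ℝ) = n * (n - 1) / 2 := by
  rw [← sum_subset (Ico_subset_Ico_right h), sum_sub_one n (fun i => (i : ℝ)) (by simp)]
  · clear h
    induction n with
    | zero => simp
    | succ n ih => rw [sum_range_succ, ih]; push_cast; ring
  · intro b hb hb'
    simp only [mem_Ico] at hb hb'
    rw [Nat.sub_eq_zero_of_le (by omega), Nat.cast_zero]

lemma sum_sub_two_self {j r M : ℕ} (hr : r < 2) (h : 2 * j + r ≤ M) :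
    ∑ b ∈ Ico 1 M, ((2 * j + r - 2 * b : ℕ) : ℝ) = j * (j - 1) + r * j := by
  rw [← sum_subset (Ico_subset_Ico_right h),
    sum_sub_two j r hr (fun _ i => (i : ℝ)) (by simp)]
  · clear h
    induction j with
    | zero => simp
    | succ n ih => rw [sum_range_succ, ih]; push_cast; ring
  · intro b hb hb'
    simp only [mem_Ico] at hb hb'
    rw [Nat.sub_eq_zero_of_le (by omega), Nat.cast_zero]

lemma sum_N1 (p r : ℕ) (hr : r < 2) : ∑ a ∈ Ico 1 (2 * p + r), ∑ b ∈ Ico 1 (2 * p + r),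
    ((2 * p + r - 2 * a - 2 * b : ℕ) : ℝ) = p * (p - 1) * (p - 2) / 3 + r * (p * (p - 1) / 2) := by
  rw [sum_sub_two p r hr (fun _ i => ∑ b ∈ Ico 1 (2 * p + r), ((i - 2 * b : ℕ) : ℝ)) (by simp),
    sum_congr rfl fun j hj => sum_sub_two_self hr (by rw [mem_range] at hj; omega)]
  clear hr
  induction p with
  | zero => simp
  | succ n ih => rw [sum_range_succ, ih]; push_cast; ring

lemma sum_N2 (p r : ℕ) (hr : r < 2) : ∑ a ∈ Ico 1 (2 * p + r), ∑ b ∈ Ico 1 (2 * p + r),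
    ((2 * p + r - a - 2 * b : ℕ) : ℝ) = p * (p - 1) * (4 * p - 5) / 6 +
      r * (p * (p - 1)) := by
  rw [sum_comm]
  simp_rw [Nat.sub_right_comm _ _ (2 * _)]
  rw [sum_sub_two p r hr (fun _ i => ∑ a ∈ Ico 1 (2 * p + r), ((i - a : ℕ) : ℝ)) (by simp),
    sum_congr rfl fun j hj => sum_sub_self (by rw [mem_range] at hj; omega)]
  -- `r` is `0` or `1`
  have hr2 : (r : ℝ) * r = r := by interval_cases r <;> simp
  clear hr
  induction p with
  | zero => simp
  | succ n ih => rw [sum_range_succ, ih]; push_cast; linear_combination hr2 / 2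

/-- Sum over the midpoints `m / 2` of a function of the number of pairs with that midpoint. The upper
half of the range is reflected, so that `(m + 1) / 2` and `m / 2` count the pairs for `m < ℓ`. -/
lemma sum_mid (p r : ℕ) (hr : r < 2) (F : ℕ → ℝ) : ∑ m ∈ range (2 * (2 * p + r)),
    F ((m + 1) / 2 - (m + 1 - (2 * p + r))) =
      ∑ j ∈ range p, (3 * F j + F (j + 1)) + r * (2 * F p) := by
  have h1 : ∑ m ∈ range (2 * (2 * p + r)), F ((m + 1) / 2 - (m + 1 - (2 * p + r))) =
      ∑ m ∈ range (2 * p + r), F ((m + 1) / 2) + ∑ m ∈ range (2 * p + r), F (m / 2) := by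
    rw [two_mul (2 * p + r), sum_range_add]
    congr 1
    · refine sum_congr rfl fun m hm => ?_
      rw [mem_range] at hm
      congr 1; omega
    · rw [← sum_range_reflect]
      refine sum_congr rfl fun m hm => ?_
      rw [mem_range] at hm
      congr 1; omega
  have h2 : ∀ p, ∑ m ∈ range (2 * p), F ((m + 1) / 2) + ∑ m ∈ range (2 * p), F (m / 2) =
      ∑ j ∈ range p, (3 * F j + F (j + 1)) := by
    intro p
    induction p with
    | zero => simp
    | succ n ih =>
      rw [Nat.mul_succ, sum_range_succ _ (2 * n + 1), sum_range_succ _ (2 * n),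
        sum_range_succ _ (2 * n + 1), sum_range_succ _ (2 * n), sum_range_succ _ n, ← ih]
      rw [show (2 * n + 1) / 2 = n by omega, show (2 * n + 1 + 1) / 2 = n + 1 by omega,
        show 2 * n / 2 = n by omega]
      ring
  rw [h1]
  interval_cases r
  · simp [h2]
  · rw [sum_range_succ, sum_range_succ, ← h2, show (2 * p + 1) / 2 = p by omega,
      show 2 * p / 2 = p by omega]
    push_cast; ring

/-- The analogue of `sum_mid` for integral midpoints, i.e. even `m`. -/
lemma sum_mid_even (p r : ℕ) (hr : r < 2) (F : ℕ → ℝ) :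
    ∑ m ∈ (range (2 * (2 * p + r))).filter (fun m => m % 2 = 0),
      F ((m + 1) / 2 - (m + 1 - (2 * p + r))) = 2 * ∑ j ∈ range p, F j + r * F p := by
  have h1 : ∑ m ∈ (range (2 * (2 * p + r))).filter (fun m => m % 2 = 0),
      F ((m + 1) / 2 - (m + 1 - (2 * p + r))) =
      ∑ i ∈ range (p + r + p), F (i - (2 * i + 1 - (2 * p + r))) := by
    refine sum_nbij' (fun m => m / 2) (fun i => 2 * i) ?_ ?_ ?_ ?_ ?_
    all_goals intro b hb; simp only [mem_filter, mem_range] at hb ⊢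
    · omega
    · omega
    · omega
    · omega
    · congr 1; omega
  rw [h1, sum_range_add]
  have h2 : ∑ i ∈ range (p + r), F (i - (2 * i + 1 - (2 * p + r))) = ∑ i ∈ range (p + r), F i := by
    refine sum_congr rfl fun i hi => ?_
    rw [mem_range] at hi
    congr 1; omega
  have h3 : ∑ i ∈ range p, F (p + r + i - (2 * (p + r + i) + 1 - (2 * p + r))) =
      ∑ i ∈ range p, F i := by
    rw [← sum_range_reflect F]
    refine sum_congr rfl fun i hi => ?_
    rw [mem_range] at hi
    congr 1; omega
  rw [h2, h3]
  interval_cases r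
  · simp; ring
  · rw [sum_range_succ]; push_cast; ring

lemma sum_even_shift (ℓ : ℕ) (F : ℕ → ℝ) (hF : ∀ d, ℓ ≤ d → F d = 0) :
    ∑ d ∈ (Ico 1 ℓ).filter (fun d => d % 2 = 0), F d = ∑ b ∈ Ico 1 ℓ, F (2 * b) := by
  have h : ∑ b ∈ Ico 1 ℓ, F (2 * b) = ∑ b ∈ (Ico 1 ℓ).filter (fun b => 2 * b < ℓ), F (2 * b) := by
    rw [sum_filter]
    refine sum_congr rfl fun b _ => ?_
    split_ifs with hb
    · rfl
    · exact hF _ (by omega)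
  rw [h]
  refine sum_nbij' (fun m => m / 2) (fun i => 2 * i) ?_ ?_ ?_ ?_ ?_
  all_goals intro b hb; simp only [mem_filter, mem_Ico] at hb ⊢
  · omega
  · omega
  · omega
  · omega
  · congr 1; omega

/-- The sum of `ℓ - 3 * b` is left unevaluated: it depends on `ℓ` modulo `3` and cancels against the
one in `quads_pairs_closed`. -/
lemma quads_closed (p r : ℕ) (hr : r < 2) :
    (tri (quads (2 * p + r)) (quads (2 * p + r)) (quads (2 * p + r)) : ℝ) =
      ((2 * p + r) * (2 * p + r - 1) * (2 * p + r - 2) * (2 * p + r - 3) / 4 -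
        6 * (p * (p - 1) * (5 * p - 7) / 3 + r * (p * (5 * p - 5) / 2)) +
        6 * ∑ b ∈ Ico 1 (2 * p + r), ((2 * p + r - 3 * b : ℕ) : ℝ)) +
      (p * (p - 1) * (p - 2) * (p - 2) + r * (2 * (p * (p - 1) * (p - 2)))) := by
  rw [tri_quads_sum]
  push_cast
  simp_rw [card_distinct3, Nat.card_Ico]
  rw [sum_mid p r hr (fun k => (k : ℝ) * (k - 1) * (k - 2))]
  have h0 : ∑ d ∈ Ico 1 (2 * p + r), ((good3 (2 * p + r - d) d).card : ℝ) =
      ∑ d ∈ Ico 1 (2 * p + r), (fun i : ℕ => (i : ℝ) * (i - 1) * (i - 2)) (2 * p + r - d) -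
      6 * ∑ b ∈ Ico 1 (2 * p + r),
        (fun b i => (2 * p + r - b - 2 : ℝ) * (i : ℕ)) b (2 * p + r - 2 * b) +
      6 * ∑ b ∈ Ico 1 (2 * p + r), ((2 * p + r - 3 * b : ℕ) : ℝ) := by
    rw [mul_sum, mul_sum, ← sum_sub_distrib, ← sum_add_distrib]
    refine sum_congr rfl fun d hd => ?_
    rw [mem_Ico] at hd
    rw [card_good3 hd.1, show 2 * p + r - d - d = 2 * p + r - 2 * d by omega,
      show 2 * p + r - d - 2 * d = 2 * p + r - 3 * d by omega]
    have : ((2 * p + r - d : ℕ) : ℝ) = 2 * p + r - d := by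
      rw [Nat.cast_sub (by omega)]; push_cast; ring
    simp only [this]
    ring
  have h1 : ∀ n : ℕ, ∑ i ∈ range n, (i : ℝ) * (i - 1) * (i - 2) = n * (n - 1) * (n - 2) * (n - 3) / 4 := by
    intro n
    induction n with
    | zero => simp
    | succ n ih => rw [sum_range_succ, ih]; push_cast; ring
  have h2 : ∀ (n : ℕ) (c : ℝ), ∑ j ∈ range n, (c + j) * (2 * j + r) =
      c * (n * (n - 1) + r * n) + n * (n - 1) * (2 * n - 1) / 3 + r * (n * (n - 1) / 2) := by
    intro n c
    induction n with
    | zero => simp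
    | succ n ih => rw [sum_range_succ, ih]; push_cast; ring
  have h3 : ∑ j ∈ range p, (2 * p + r - (p - j : ℕ) - 2 : ℝ) * ((2 * j + r : ℕ) : ℝ) =
      ∑ j ∈ range p, ((p + r - 2 : ℝ) + j) * (2 * j + r) := by
    refine sum_congr rfl fun j hj => ?_
    rw [mem_range] at hj
    rw [Nat.cast_sub hj.le]; push_cast; ring
  have h4 : ∀ n : ℕ, ∑ j ∈ range n, (3 * ((j : ℝ) * (j - 1) * (j - 2)) +
      ((j + 1 : ℕ) : ℝ) * ((j + 1 : ℕ) - 1) * ((j + 1 : ℕ) - 2)) =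
      n * (n - 1) * (n - 2) * (n - 2) := by
    intro n
    induction n with
    | zero => simp
    | succ n ih => rw [sum_range_succ, ih]; push_cast; ring
  rw [h0, sum_sub_one _ (fun i : ℕ => (i : ℝ) * (i - 1) * (i - 2)) (by simp),
    sum_sub_two p r hr (fun b i => (2 * p + r - b - 2 : ℝ) * (i : ℕ)) (by simp), h1, h3, h2, h4]
  push_cast
  interval_cases r <;> push_cast <;> ring

lemma quads_pairs_closed (p r : ℕ) (hr : r < 2) :
    (tri (quads (2 * p + r)) (quads (2 * p + r)) (evPairs (2 * p + r)) : ℝ) =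
      2 * (p * (p - 1) * (p - 2) / 3 + r * (p * (p - 1) / 2)) +
      4 * (p * (p - 1) * (4 * p - 5) / 6 + r * (p * (p - 1)) -
        ∑ b ∈ Ico 1 (2 * p + r), ((2 * p + r - 3 * b : ℕ) : ℝ)) := by
  rw [tri_quads_pairs_sum, sum_N1 p r hr, sum_N2 p r hr]

lemma pairs_quads_closed (p r : ℕ) (hr : r < 2) :
    (tri (evPairs (2 * p + r)) (evPairs (2 * p + r)) (quads (2 * p + r)) : ℝ) =
      (p * (p - 1) * (4 * p - 5) / 3 + r * (2 * p * (p - 1)) -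
        2 * ∑ b ∈ Ico 1 (2 * p + r), ((2 * p + r - 4 * b : ℕ) : ℝ)) +
      (2 * (p * (p - 1) * (p - 2) / 3) + r * (p * (p - 1))) := by
  rw [tri_pairs_quads_sum]
  push_cast
  simp_rw [card_offDiag_real, Nat.card_Ico]
  rw [sum_mid_even p r hr (fun k => (k : ℝ) * (k - 1))]
  have h0 : ∑ d ∈ (Ico 1 (2 * p + r)).filter (fun d => d % 2 = 0),
      ((good2 (2 * p + r - d) d).card : ℝ) =
      ∑ b ∈ Ico 1 (2 * p + r), (fun _ i : ℕ => (i : ℝ) ^ 2 - i) b (2 * p + r - 2 * b) -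
      2 * ∑ b ∈ Ico 1 (2 * p + r), ((2 * p + r - 4 * b : ℕ) : ℝ) := by
    rw [mul_sum, ← sum_sub_distrib, sum_congr rfl (g := fun d => ((2 * p + r - d : ℕ) : ℝ) ^ 2 -
      ((2 * p + r - d : ℕ) : ℝ) - 2 * ((2 * p + r - 2 * d : ℕ) : ℝ)), sum_even_shift]
    · refine sum_congr rfl fun d hd => ?_
      rw [show 2 * (2 * d) = 4 * d by ring]
    · intro d hd
      rw [Nat.sub_eq_zero_of_le hd, Nat.sub_eq_zero_of_le (by omega)]; simp
    · intro d hd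
      simp only [mem_filter, mem_Ico] at hd
      rw [card_good2 hd.1.1, show 2 * p + r - d - d = 2 * p + r - 2 * d by omega]
  have h1 : ∀ n : ℕ, ∑ j ∈ range n, (((2 * j + r : ℕ) : ℝ) ^ 2 - (2 * j + r : ℕ)) =
      n * (n - 1) * (4 * n - 5) / 3 + r * (2 * n * (n - 1)) := by
    intro n
    have hr2 : (r : ℝ) * r = r := by interval_cases r <;> simp
    induction n with
    | zero => simp
    | succ n ih => rw [sum_range_succ, ih]; push_cast; linear_combination hr2
  have h2 : ∀ n : ℕ, ∑ j ∈ range n, (j : ℝ) * (j - 1) = n * (n - 1) * (n - 2) / 3 := by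
    intro n
    induction n with
    | zero => simp
    | succ n ih => rw [sum_range_succ, ih]; push_cast; ring
  rw [h0, sum_sub_two p r hr (fun _ i : ℕ => (i : ℝ) ^ 2 - i) (by simp), h1, h2]

/-- The numerator of the third central moment as a polynomial in `p = ℓ / 2` and `r = ℓ % 2`, up to
the sum of `ℓ - 4 * b`. The sums of `ℓ - 3 * b` cancel because `512 * 6 = 768 * 4`. -/
lemma numerator_closed (p r : ℕ) (hr : r < 2) :
    512 * (tri (quads (2 * p + r)) (quads (2 * p + r)) (quads (2 * p + r)) : ℝ) +
      768 * tri (quads (2 * p + r)) (quads (2 * p + r)) (evPairs (2 * p + r)) +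
      384 * tri (evPairs (2 * p + r)) (evPairs (2 * p + r)) (quads (2 * p + r)) +
      64 * tri (evPairs (2 * p + r)) (evPairs (2 * p + r)) (evPairs (2 * p + r)) =
    512 * ((2 * p + r) * (2 * p + r - 1) * (2 * p + r - 2) * (2 * p + r - 3) / 4 -
        6 * (p * (p - 1) * (5 * p - 7) / 3 + r * (p * (5 * p - 5) / 2)) +
      (p * (p - 1) * (p - 2) * (p - 2) + r * (2 * (p * (p - 1) * (p - 2))))) +
    768 * (2 * (p * (p - 1) * (p - 2) / 3 + r * (p * (p - 1) / 2)) +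
      4 * (p * (p - 1) * (4 * p - 5) / 6 + r * (p * (p - 1)))) +
    384 * ((p * (p - 1) * (4 * p - 5) / 3 + r * (2 * p * (p - 1)) -
        2 * ∑ b ∈ Ico 1 (2 * p + r), ((2 * p + r - 4 * b : ℕ) : ℝ)) +
      (2 * (p * (p - 1) * (p - 2) / 3) + r * (p * (p - 1)))) +
    64 * ((p + r) * (p + r - 1) * (p + r - 2) + p * (p - 1) * (p - 2)) := by
  rw [quads_closed p r hr, quads_pairs_closed p r hr, pairs_quads_closed p r hr, tri_pairs_sum,
    show (2 * p + r + 1) / 2 = p + r by omega, show (2 * p + r) / 2 = p by omega]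
  push_cast
  ring

end ThirdMoment

/-- Katz–Ramirez 2023: the third central moment of the demerit factor over all
binary sequences of length `ℓ`. -/
theorem third_moment_ADF (ℓ : ℕ) (hℓ : 0 < ℓ) :
    (ℓ % 4 = 0 → centralMoment 3 ℓ ADF =
      (160 * (ℓ : ℝ) ^ 4 - 1296 * (ℓ : ℝ) ^ 3 + 3296 * (ℓ : ℝ) ^ 2 - 2496 * (ℓ : ℝ)) /
        (ℓ : ℝ) ^ 6) ∧
    (ℓ % 4 = 1 ∨ ℓ % 4 = 3 → centralMoment 3 ℓ ADF =
      (160 * (ℓ : ℝ) ^ 4 - 1296 * (ℓ : ℝ) ^ 3 + 3296 * (ℓ : ℝ) ^ 2 - 2736 * (ℓ : ℝ) + 576) /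
        (ℓ : ℝ) ^ 6) ∧
    (ℓ % 4 = 2 → centralMoment 3 ℓ ADF =
      (160 * (ℓ : ℝ) ^ 4 - 1296 * (ℓ : ℝ) ^ 3 + 3296 * (ℓ : ℝ) ^ 2 - 2496 * (ℓ : ℝ) - 384) /
        (ℓ : ℝ) ^ 6) := by
  rw [ThirdMoment.centralMoment_eq]
  -- write `ℓ = 2 (2 q + s) + r` with `s, r ∈ {0, 1}`
  obtain ⟨q, s, r, hs, hr, rfl⟩ : ∃ q s r, s < 2 ∧ r < 2 ∧ ℓ = 2 * (2 * q + s) + r :=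
    ⟨ℓ / 4, ℓ / 2 % 2, ℓ % 2, by omega, by omega, by omega⟩
  have h4 : ∑ b ∈ Ico 1 (2 * (2 * q + s) + r), ((2 * (2 * q + s) + r - 4 * b : ℕ) : ℝ) =
      2 * q * (q - 1) + (2 * s + r) * q := by
    rw [show 2 * (2 * q + s) + r = 4 * q + (2 * s + r) by omega,
      ThirdMoment.sum_sub_four q (2 * s + r) (by omega)]
    push_cast; ring
  rw [ThirdMoment.numerator_closed (2 * q + s) r hr, h4]
  refine ⟨fun h => ?_, fun h => ?_, fun h => ?_⟩
  · obtain ⟨rfl, rfl⟩ : s = 0 ∧ r = 0 := by omega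
    congr 1; push_cast; ring
  · obtain rfl : r = 1 := by omega
    interval_cases s <;> (congr 1; push_cast; ring)
  · obtain ⟨rfl, rfl⟩ : s = 1 ∧ r = 0 := by omega
    congr 1; push_cast; ring
end
end

section
/- For all p, ℓ ∈ ℕ, the p-th central moment of ssac over all binary sequences of length ℓ equals the sum, over all contributory partitions 𝒫 of [p]×[2]×[2], of the cardinality |As(𝒫,=,ℓ)|; that is, μ_{p,ℓ}[ssac] = Σ_{𝒫 ∈ Con(p)} |As(𝒫,=,ℓ)|. -/
/-!
Write `ε` for the random signs. Expanding the squared autocorrelations gives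
`ssac = ∑ ε(a) ε(b) ε(c) ε(d)` over all positions with `a + b = c + d` (`ssac_seqOf`). By
independence, the mean of a monomial in the signs is `1` if every sign occurs in it to an even
power and `0` otherwise (`sum_prod_sgn`). In the even case the monomial is identically `1`, so
`ssac - E[ssac]` is the same sum restricted to the quadruples in which some position has odd
multiplicity (`ssac_sub_mean`).

Expanding the `p`-th power and taking the mean once more, the central moment counts the
assignments `τ` on `[p]×[2]×[2]` with values in `[ℓ]` that satisfy all `p` equations, take every
value an even number of times, and on each block take some value an odd number of times
(`centralMoment_eq_card`). These parity conditions depend only on the partition of the index set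
into level sets of `τ` and say that this partition is GELO (`IsKer.gelo_iff`); it is satisfiable
because `τ` witnesses it. Grouping the assignments by their partition of level sets yields the
sum over contributory partitions, the group of `Pt` being `As(Pt,=,ℓ)` (`asEq_eq_image`).
-/

open Finset Filter

noncomputable section

/-- Index set `[p] × [2] × [2]`. -/
abbrev Idx (p : ℕ) := Fin p × Fin 2 × Fin 2

/-- `β` and `γ` lie in the same class of the partition `Pt`. -/
def SameClass {p : ℕ} (Pt : Finpartition (Finset.univ : Finset (Idx p))) (β γ : Idx p) : Prop :=
  ∃ P ∈ Pt.parts, β ∈ P ∧ γ ∈ P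

/-- The system of equations `τ(e,0,0)+τ(e,0,1) = τ(e,1,0)+τ(e,1,1)`. -/
def EqCond {p : ℕ} (τ : Idx p → ℕ) : Prop :=
  ∀ e : Fin p, τ (e, 0, 0) + τ (e, 0, 1) = τ (e, 1, 0) + τ (e, 1, 1)

/-- `As(Pt,=,ℓ)`. -/
def AsEq {p : ℕ} (Pt : Finpartition (Finset.univ : Finset (Idx p))) (ℓ : ℕ) :
    Set (Idx p → ℕ) :=
  {τ | (∀ i, τ i < ℓ) ∧ EqCond τ ∧ ∀ β γ, τ β = τ γ ↔ SameClass Pt β γ}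

/-- `As(⪰Pt,=,ℓ)`. -/
def AsGe {p : ℕ} (Pt : Finpartition (Finset.univ : Finset (Idx p))) (ℓ : ℕ) :
    Set (Idx p → ℕ) :=
  {τ | (∀ i, τ i < ℓ) ∧ EqCond τ ∧ ∀ β γ, SameClass Pt β γ → τ β = τ γ}

/-- `Pt` is satisfiable. -/
def Satisfiable {p : ℕ} (Pt : Finpartition (Finset.univ : Finset (Idx p))) : Prop :=
  ∃ τ : Idx p → ℕ, EqCond τ ∧ ∀ β γ, τ β = τ γ ↔ SameClass Pt β γ

/-- `Pt` is globally even, locally odd. -/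
def GELO {p : ℕ} (Pt : Finpartition (Finset.univ : Finset (Idx p))) : Prop :=
  (∀ P ∈ Pt.parts, Even P.card) ∧
    ∀ e : Fin p, ∃ P ∈ Pt.parts, Odd ((P.filter fun x => x.1 = e).card)

/-- `Pt` is contributory. -/
def Contributory {p : ℕ} (Pt : Finpartition (Finset.univ : Finset (Idx p))) : Prop :=
  Satisfiable Pt ∧ GELO Pt

/-- The set of equations met by a class. -/
def eqnsOf {p : ℕ} (P : Finset (Idx p)) : Finset (Fin p) := P.image fun x => x.1

/-- `Pt` is separable: any two classes are equation-identical or equation-disjoint. -/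
def Separable {p : ℕ} (Pt : Finpartition (Finset.univ : Finset (Idx p))) : Prop :=
  ∀ P ∈ Pt.parts, ∀ Q ∈ Pt.parts, eqnsOf P = eqnsOf Q ∨ Disjoint (eqnsOf P) (eqnsOf Q)

/-- The number of classes of the quotient of `Pt` by equation-identicality. -/
def quotCard {p : ℕ} (Pt : Finpartition (Finset.univ : Finset (Idx p))) : ℕ :=
  (Pt.parts.image eqnsOf).card

/-- A twin class. -/
def IsTwin {p : ℕ} (P : Finset (Idx p)) : Prop :=
  ∃ e : Fin p, ∃ s : Fin 2, (e, s, 0) ∈ P ∧ (e, s, 1) ∈ P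

/-- `Pt` is principal. -/
def Principal {p : ℕ} (Pt : Finpartition (Finset.univ : Finset (Idx p))) : Prop :=
  Contributory Pt ∧ Separable Pt ∧ ∀ P ∈ Pt.parts, P.card = 2

/-- Membership in the group `W^(p)` of symmetries. -/
def InW {p : ℕ} (π : Equiv.Perm (Idx p)) : Prop :=
  ∃ ε : Equiv.Perm (Fin p), ∃ σ : Fin p → Equiv.Perm (Fin 2),
    ∃ F : Fin p → Fin 2 → Equiv.Perm (Fin 2),
      ∀ (e : Fin p) (s v : Fin 2),
        π (e, s, v) = (ε e, σ (ε e) s, F (ε e) (σ (ε e) s) v)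

/-- The restriction of `Pt` to `{e} × [2] × [2]`. -/
def restrictTo {p : ℕ} (Pt : Finpartition (Finset.univ : Finset (Idx p))) (e : Fin p) :
    Finset (Finset (Idx p)) :=
  (Pt.parts.image fun P => P.filter fun x => x.1 = e).filter fun Q => Q.Nonempty

/-! ### Expectations of products of signs -/

/-- The real sign `±1` encoded by a Boolean; `true` is `1`, as in `seqOf`. -/
def sgn (b : Bool) : ℝ := if b then 1 else -1

/-- Every value in `Fin ℓ` is taken an even number of times by `g`. -/
def EvenFibers {ι : Type} [Fintype ι] {ℓ : ℕ} (g : ι → Fin ℓ) : Prop :=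
  ∀ a, Even #{i | g i = a}

lemma sum_sgn_pow (n : ℕ) : ∑ b : Bool, sgn b ^ n = if Even n then 2 else 0 := by
  rcases Nat.even_or_odd n with h | h
  · simp [sgn, h, h.neg_one_pow, one_add_one_eq_two]
  · simp [sgn, h, h.neg_one_pow]

lemma prod_sgn {ι : Type} [Fintype ι] {ℓ : ℕ} (g : ι → Fin ℓ) (ε : Fin ℓ → Bool) :
    ∏ i, sgn (ε (g i)) = ∏ a, sgn (ε a) ^ #{i | g i = a} := by
  rw [← Finset.prod_fiberwise' univ g (fun a => sgn (ε a))]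
  simp

lemma prod_sgn_of_evenFibers {ι : Type} [Fintype ι] {ℓ : ℕ} {g : ι → Fin ℓ} (hg : EvenFibers g)
    (ε : Fin ℓ → Bool) : ∏ i, sgn (ε (g i)) = 1 := by
  rw [prod_sgn]
  refine Finset.prod_eq_one fun a _ => ?_
  cases h : ε a <;> simp [sgn, (hg a).neg_one_pow]

open Classical in
/-- Independence of the signs: a monomial in the signs has mean `1` if every sign occurs in it
to an even power, and mean `0` otherwise. -/
lemma sum_prod_sgn {ι : Type} [Fintype ι] {ℓ : ℕ} (g : ι → Fin ℓ) :
    ∑ ε : Fin ℓ → Bool, ∏ i, sgn (ε (g i)) = if EvenFibers g then (2 : ℝ) ^ ℓ else 0 := by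
  simp_rw [prod_sgn g]
  rw [← Fintype.piFinset_univ,
    ← Finset.prod_univ_sum (fun _ => univ) (fun a b => sgn b ^ #{i | g i = a})]
  simp_rw [sum_sgn_pow]
  split_ifs with h
  · rw [Finset.prod_congr rfl (fun a _ => if_pos (h a))]
    simp
  · obtain ⟨a, ha⟩ := not_forall.1 h
    exact Finset.prod_eq_zero (mem_univ a) (if_neg ha)

/-! ### The sum of squares of autocorrelations as a polynomial in the signs -/

lemma seqOf_coe {ℓ : ℕ} (ε : Fin ℓ → Bool) (x : Fin ℓ) :
    ((seqOf ℓ ε (x : ℤ) : ℤ) : ℝ) = sgn (ε x) := by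
  have h : (0 : ℤ) ≤ x ∧ (x : ℤ) < ℓ := ⟨by positivity, by exact_mod_cast x.2⟩
  simp [seqOf, sgn]

lemma seqOf_eq_zero {ℓ : ℕ} (ε : Fin ℓ → Bool) (j : ℤ) (h : ∀ x : Fin ℓ, (x : ℤ) ≠ j) :
    seqOf ℓ ε j = 0 := by
  unfold seqOf
  rw [dif_neg]
  rintro ⟨h0, h1⟩
  exact h ⟨j.toNat, by omega⟩ (by simp [h0])

lemma seqOf_eq_sum {ℓ : ℕ} (ε : Fin ℓ → Bool) (j : ℤ) :
    ((seqOf ℓ ε j : ℤ) : ℝ) = ∑ x : Fin ℓ, if (x : ℤ) = j then sgn (ε x) else 0 := by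
  by_cases h : ∃ x : Fin ℓ, (x : ℤ) = j
  · obtain ⟨y, rfl⟩ := h
    rw [seqOf_coe, Finset.sum_eq_single y]
    · simp
    · intro x _ hx
      rw [if_neg]
      exact fun h => hx (Fin.ext (by exact_mod_cast h))
    · simp
  · push Not at h
    rw [seqOf_eq_zero ε j h]
    simp [h]

lemma autocorr_seqOf_s4 {ℓ : ℕ} (ε : Fin ℓ → Bool) (s : ℤ) :
    ((autocorr (seqOf ℓ ε) s : ℤ) : ℝ) =
      ∑ x : Fin ℓ, ∑ y : Fin ℓ, if (x : ℤ) - y = s then sgn (ε x) * sgn (ε y) else 0 := by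
  have hinj : Function.Injective (fun y : Fin ℓ => (y : ℤ)) :=
    fun a b h => Fin.ext (Int.ofNat_inj.1 h)
  have h1 : autocorr (seqOf ℓ ε) s =
      ∑ j ∈ univ.image (fun y : Fin ℓ => (y : ℤ)), seqOf ℓ ε (j + s) * seqOf ℓ ε j := by
    refine finsum_eq_sum_of_support_subset _ fun j hj => ?_
    by_contra hc
    refine hj ?_
    simp only [coe_image, coe_univ, Set.image_univ, Set.mem_range, not_exists] at hc
    simp [seqOf_eq_zero ε j hc]
  rw [h1, Finset.sum_image (fun a _ b _ h => hinj h), Finset.sum_comm]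
  push_cast
  refine Finset.sum_congr rfl fun y _ => ?_
  rw [seqOf_coe, seqOf_eq_sum, Finset.sum_mul]
  refine Finset.sum_congr rfl fun x _ => ?_
  have : (x : ℤ) = y + s ↔ (x : ℤ) - y = s := by omega
  simp [this]

/-- The `[2]×[2]`-tuples of positions satisfying the defining linear equation of one block. -/
def quads (ℓ : ℕ) : Finset (Fin 2 × Fin 2 → Fin ℓ) :=
  {t | (t (0, 0) : ℕ) + t (0, 1) = t (1, 0) + t (1, 1)}

lemma mem_quads {ℓ : ℕ} {t : Fin 2 × Fin 2 → Fin ℓ} :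
    t ∈ quads ℓ ↔ (t (0, 0) : ℕ) + t (0, 1) = t (1, 0) + t (1, 1) := by
  simp [quads]

/-- Expanding the squares, `ssac` is the sum of `f(a) f(b) f(c) f(d)` over `a + b = c + d`. -/
lemma ssac_seqOf {ℓ : ℕ} (ε : Fin ℓ → Bool) :
    ssac (seqOf ℓ ε) = ∑ t ∈ quads ℓ, ∏ i, sgn (ε (t i)) := by
  -- only shifts smaller than `ℓ` in absolute value contribute
  have h1 : ssac (seqOf ℓ ε) = ∑ s ∈ Finset.Icc (-(ℓ : ℤ)) ℓ,
      ((autocorr (seqOf ℓ ε) s : ℤ) : ℝ) ^ 2 := by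
    refine finsum_eq_sum_of_support_subset _ fun s hs => ?_
    by_contra hc
    refine hs ?_
    have : ((autocorr (seqOf ℓ ε) s : ℤ) : ℝ) = 0 := by
      rw [autocorr_seqOf_s4]
      refine Finset.sum_eq_zero fun x _ => Finset.sum_eq_zero fun y _ => if_neg fun h => hc ?_
      rw [Finset.mem_coe, Finset.mem_Icc]
      have := x.2
      have := y.2
      omega
    simp only [this]
    norm_num
  have h2 : ∀ s : ℤ, ((autocorr (seqOf ℓ ε) s : ℤ) : ℝ) ^ 2 =
      ∑ q : (Fin ℓ × Fin ℓ) × (Fin ℓ × Fin ℓ),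
        if (q.1.1 : ℤ) - q.1.2 = s ∧ (q.2.1 : ℤ) - q.2.2 = s then
          (sgn (ε q.1.1) * sgn (ε q.1.2)) * (sgn (ε q.2.1) * sgn (ε q.2.2)) else 0 := by
    intro s
    rw [autocorr_seqOf_s4, ← Fintype.sum_prod_type', sq, Fintype.sum_mul_sum,
      ← Fintype.sum_prod_type']
    refine Finset.sum_congr rfl fun q _ => ?_
    split_ifs <;> simp_all
  have h3 : ∀ q : (Fin ℓ × Fin ℓ) × (Fin ℓ × Fin ℓ),
      (∑ s ∈ Finset.Icc (-(ℓ : ℤ)) ℓ,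
        if (q.1.1 : ℤ) - q.1.2 = s ∧ (q.2.1 : ℤ) - q.2.2 = s then
          (sgn (ε q.1.1) * sgn (ε q.1.2)) * (sgn (ε q.2.1) * sgn (ε q.2.2)) else 0) =
      if (q.1.1 : ℕ) + q.2.2 = q.2.1 + q.1.2 then
          (sgn (ε q.1.1) * sgn (ε q.1.2)) * (sgn (ε q.2.1) * sgn (ε q.2.2)) else 0 := by
    rintro ⟨⟨x, y⟩, ⟨z, w⟩⟩
    have := x.2
    have := y.2
    rw [Finset.sum_eq_single ((x : ℤ) - y)]
    · refine if_congr ?_ rfl rfl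
      dsimp only
      omega
    · intro s _ hs
      exact if_neg fun h => hs h.1.symm
    · intro h
      exact absurd (Finset.mem_Icc.2 (by omega)) h
  rw [h1, Finset.sum_congr rfl (fun s _ => h2 s), Finset.sum_comm,
    Finset.sum_congr rfl (fun q _ => h3 q), ← Finset.sum_filter]
  refine Finset.sum_bij' (fun q _ => fun i : Fin 2 × Fin 2 =>
      !![q.1.1, q.2.2; q.2.1, q.1.2] i.1 i.2)
    (fun t _ => ((t (0, 0), t (1, 1)), (t (1, 0), t (0, 1)))) ?_ ?_ ?_ ?_ ?_
  · intro q hq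
    simpa [mem_quads] using hq
  · intro t ht
    simpa [mem_quads] using ht
  · intro q _
    simp
  · intro t _
    ext ⟨i, j⟩
    fin_cases i <;> fin_cases j <;> simp
  · intro q _
    simp only [Fintype.prod_prod_type, Fin.prod_univ_two]
    simp
    ring

/-! ### Expanding the power -/

open Classical in
/-- Subtracting the mean removes exactly the tuples all of whose values have even multiplicity. -/
lemma ssac_sub_mean {ℓ : ℕ} (ε : Fin ℓ → Bool) :
    ssac (seqOf ℓ ε) - _root_.expect ℓ ssac =
      ∑ t ∈ quads ℓ with ¬ EvenFibers t, ∏ i, sgn (ε (t i)) := by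
  have hE : _root_.expect ℓ ssac = #{t ∈ quads ℓ | EvenFibers t} := by
    unfold _root_.expect
    rw [Finset.sum_congr rfl (fun ε _ => ssac_seqOf ε), Finset.sum_comm,
      Finset.sum_congr rfl (fun t _ => sum_prod_sgn t), ← Finset.sum_filter]
    simp
  rw [hE, ssac_seqOf, ← Finset.sum_filter_add_sum_filter_not (quads ℓ) EvenFibers,
    Finset.sum_congr rfl (fun t ht => prod_sgn_of_evenFibers (Finset.mem_filter.1 ht).2 ε)]
  simp

open Classical in
/-- Assignments with values in `[ℓ]`, written as `p`-tuples of quadruples, that satisfy every linear equation,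
take each value an even number of times overall, but do not do so on any single block. -/
def goodTuples (p ℓ : ℕ) : Finset (Fin p → Fin 2 × Fin 2 → Fin ℓ) :=
  {T ∈ Fintype.piFinset fun _ => {t ∈ quads ℓ | ¬ EvenFibers t} |
    EvenFibers fun x : Idx p => T x.1 x.2}

lemma mem_goodTuples {p ℓ : ℕ} {T : Fin p → Fin 2 × Fin 2 → Fin ℓ} :
    T ∈ goodTuples p ℓ ↔
      (∀ e, T e ∈ quads ℓ) ∧ (∀ e, ¬ EvenFibers (T e)) ∧
        EvenFibers fun x : Idx p => T x.1 x.2 := by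
  simp only [goodTuples, Finset.mem_filter, Fintype.mem_piFinset, forall_and, and_assoc]

/-- The mean over sign choices keeps exactly those terms of the expanded `p`-th power whose
index tuple takes every value an even number of times. -/
lemma centralMoment_eq_card (p ℓ : ℕ) : centralMoment p ℓ ssac = #(goodTuples p ℓ) := by
  classical
  have h : ∀ ε : Fin ℓ → Bool, (ssac (seqOf ℓ ε) - _root_.expect ℓ ssac) ^ p =
      ∑ T ∈ Fintype.piFinset fun _ : Fin p => {t ∈ quads ℓ | ¬ EvenFibers t},
        ∏ x : Idx p, sgn (ε (T x.1 x.2)) := by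
    intro ε
    have := Finset.prod_univ_sum (fun _ : Fin p => {t ∈ quads ℓ | ¬ EvenFibers t})
      (fun _ t => ∏ i, sgn (ε (t i)))
    rw [Finset.prod_const, Finset.card_univ, Fintype.card_fin] at this
    rw [ssac_sub_mean, this]
    exact Finset.sum_congr rfl fun T _ =>
      (Fintype.prod_prod_type' fun e i => sgn (ε (T e i))).symm
  rw [centralMoment, _root_.expect, Finset.sum_congr rfl (fun ε _ => h ε), Finset.sum_comm,
    Finset.sum_congr rfl (fun T _ => sum_prod_sgn fun x : Idx p => T x.1 x.2),
    ← Finset.sum_filter, goodTuples]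
  simp

/-! ### Grouping assignments by their kernel partition -/

/-- `Pt` is the partition of the index set into the level sets of `g`. -/
def IsKer {p : ℕ} {α : Type} (Pt : Finpartition (Finset.univ : Finset (Idx p)))
    (g : Idx p → α) : Prop :=
  ∀ β γ, g β = g γ ↔ SameClass Pt β γ

lemma IsKer.mem_parts {p : ℕ} {α : Type} [DecidableEq α]
    {Pt : Finpartition (Finset.univ : Finset (Idx p))} {g : Idx p → α} (h : IsKer Pt g)
    (P : Finset (Idx p)) :
    P ∈ Pt.parts ↔ ∃ x, P = ({y | g y = g x} : Finset (Idx p)) := by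
  have key : ∀ x, ∀ Q ∈ Pt.parts, x ∈ Q → Q = ({y | g y = g x} : Finset (Idx p)) := by
    intro x Q hQ hx
    ext y
    rw [Finset.mem_filter, h]
    constructor
    · exact fun hy => ⟨mem_univ _, Q, hQ, hy, hx⟩
    · rintro ⟨-, R, hR, hy, hx'⟩
      rwa [Pt.eq_of_mem_parts hQ hR hx hx']
  constructor
  · intro hP
    obtain ⟨x, hx⟩ := Pt.nonempty_of_mem_parts hP
    exact ⟨x, key x P hP hx⟩
  · rintro ⟨x, rfl⟩
    obtain ⟨Q, hQ, hx⟩ := Pt.exists_mem (mem_univ x)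
    exact key x Q hQ hx ▸ hQ

lemma IsKer.unique {p : ℕ} {α : Type} [DecidableEq α]
    {Pt Qt : Finpartition (Finset.univ : Finset (Idx p))} {g : Idx p → α}
    (h : IsKer Pt g) (h' : IsKer Qt g) : Pt = Qt := by
  ext P
  rw [h.mem_parts, h'.mem_parts]

lemma exists_isKer {p : ℕ} {α : Type} [DecidableEq α] (g : Idx p → α) :
    ∃ Pt : Finpartition (Finset.univ : Finset (Idx p)), IsKer Pt g := by
  classical
  refine ⟨Finpartition.ofSetoid (Setoid.ker g), fun β γ => ?_⟩
  have := Finpartition.mem_part_ofSetoid_iff_rel (s := Setoid.ker g) (a := γ) (b := β)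
  rw [Finpartition.mem_part_iff_exists, Setoid.ker_def] at this
  exact eq_comm.trans this.symm

/-- The condition GELO on the kernel partition of `g` only concerns the fibres of `g`. -/
lemma IsKer.gelo_iff {p ℓ : ℕ} {Pt : Finpartition (Finset.univ : Finset (Idx p))}
    {g : Idx p → Fin ℓ} (h : IsKer Pt g) :
    GELO Pt ↔ EvenFibers g ∧ ∀ e, ¬ EvenFibers fun i => g (e, i) := by
  have hloc : ∀ (e : Fin p) (a : Fin ℓ),
      #{x ∈ ({y | g y = a} : Finset (Idx p)) | x.1 = e} = #{i | g (e, i) = a} := by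
    intro e a
    refine Finset.card_nbij' (fun x => x.2) (fun i => (e, i)) ?_ ?_ ?_ ?_
    · rintro ⟨e', i⟩ hx
      simp only [coe_filter, mem_filter, mem_univ, true_and, Set.mem_ofPred_eq] at hx ⊢
      rw [← hx.1, ← hx.2]
    · intro i hi
      simpa using hi
    · rintro ⟨e', i⟩ hx
      simp only [coe_filter, mem_filter, mem_univ, true_and, Set.mem_ofPred_eq] at hx
      rw [← hx.2]
    · intro i _
      rfl
  refine and_congr ⟨fun H a => ?_, fun H P hP => ?_⟩ (forall_congr' fun e => ?_)
  · by_cases ha : ∃ x, g x = a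
    · obtain ⟨x, rfl⟩ := ha
      exact H _ ((h.mem_parts _).2 ⟨x, rfl⟩)
    · push Not at ha
      simp [ha]
  · obtain ⟨x, rfl⟩ := (h.mem_parts P).1 hP
    exact H (g x)
  · simp only [EvenFibers, not_forall, Nat.not_even_iff_odd]
    constructor
    · rintro ⟨P, hP, hodd⟩
      obtain ⟨x, rfl⟩ := (h.mem_parts P).1 hP
      exact ⟨g x, by rwa [hloc] at hodd⟩
    · rintro ⟨a, ha⟩
      obtain ⟨i, hi⟩ := Finset.card_pos.1 ha.pos
      have hi' : g (e, i) = a := by simpa using hi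
      exact ⟨_, (h.mem_parts _).2 ⟨(e, i), rfl⟩, by rwa [hloc, hi']⟩

/-- The assignment `[p]×[2]×[2] → ℕ` underlying a `p`-tuple of quadruples of elements of `[ℓ]`. -/
def toAssignment {p ℓ : ℕ} (T : Fin p → Fin 2 × Fin 2 → Fin ℓ) : Idx p → ℕ :=
  fun x => T x.1 x.2

lemma toAssignment_injective {p ℓ : ℕ} :
    Function.Injective (toAssignment : (Fin p → Fin 2 × Fin 2 → Fin ℓ) → _) := by
  intro T T' h
  funext e i
  exact Fin.ext (congrFun h (e, i))

lemma isKer_toAssignment {p ℓ : ℕ} {Pt : Finpartition (Finset.univ : Finset (Idx p))}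
    {T : Fin p → Fin 2 × Fin 2 → Fin ℓ} :
    IsKer Pt (toAssignment T) ↔ IsKer Pt fun x : Idx p => T x.1 x.2 := by
  simp only [IsKer, toAssignment, Fin.val_inj]

lemma eqCond_toAssignment {p ℓ : ℕ} {T : Fin p → Fin 2 × Fin 2 → Fin ℓ} :
    EqCond (toAssignment T) ↔ ∀ e, T e ∈ quads ℓ := by
  simp only [EqCond, toAssignment, mem_quads]

/-- For contributory `Pt`, the assignments in `As(Pt,=,ℓ)` are the good tuples with kernel `Pt`. -/
lemma asEq_eq_image {p ℓ : ℕ} {Pt : Finpartition (Finset.univ : Finset (Idx p))}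
    (hPt : GELO Pt) :
    AsEq Pt ℓ = toAssignment ''
      {T | T ∈ goodTuples p ℓ ∧ IsKer Pt fun x : Idx p => T x.1 x.2} := by
  ext τ
  constructor
  · rintro ⟨hlt, heq, hker⟩
    obtain ⟨T, rfl⟩ : ∃ T : Fin p → Fin 2 × Fin 2 → Fin ℓ, toAssignment T = τ :=
      ⟨fun e i => ⟨τ (e, i), hlt _⟩, rfl⟩
    have hk := isKer_toAssignment.1 hker
    have hg := hk.gelo_iff.1 hPt
    exact ⟨T, ⟨mem_goodTuples.2 ⟨eqCond_toAssignment.1 heq, hg.2, hg.1⟩, hk⟩, rfl⟩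
  · rintro ⟨T, ⟨hT, hk⟩, rfl⟩
    exact ⟨fun x => (T x.1 x.2).2, eqCond_toAssignment.2 (mem_goodTuples.1 hT).1,
      isKer_toAssignment.2 hk⟩

/-- The kernel partition of a good tuple is contributory, the tuple itself being a witness of
satisfiability. -/
lemma contributory_of_isKer {p ℓ : ℕ} {Pt : Finpartition (Finset.univ : Finset (Idx p))}
    {T : Fin p → Fin 2 × Fin 2 → Fin ℓ} (hT : T ∈ goodTuples p ℓ)
    (hk : IsKer Pt fun x : Idx p => T x.1 x.2) : Contributory Pt := by
  obtain ⟨h1, h2, h3⟩ := mem_goodTuples.1 hT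
  exact ⟨⟨toAssignment T, eqCond_toAssignment.2 h1, isKer_toAssignment.2 hk⟩,
    hk.gelo_iff.2 ⟨h3, h2⟩⟩

/-- The `p`-th central moment of `ssac` equals the sum over all contributory
partitions `𝒫` of `[p]×[2]×[2]` of `|As(𝒫,=,ℓ)|`. -/
theorem central_moment_ssac_eq_sum (p ℓ : ℕ) :
    centralMoment p ℓ ssac =
      ∑ᶠ Pt ∈ {Pt : Finpartition (Finset.univ : Finset (Idx p)) | Contributory Pt},
        ((AsEq Pt ℓ).ncard : ℝ) := by
  classical
  choose ker hker using fun T : Fin p → Fin 2 × Fin 2 → Fin ℓ =>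
    exists_isKer fun x : Idx p => T x.1 x.2
  have hmaps : Set.MapsTo ker (goodTuples p ℓ : Set (Fin p → Fin 2 × Fin 2 → Fin ℓ))
      ((Set.toFinite {Pt : Finpartition (Finset.univ : Finset (Idx p)) |
        Contributory Pt}).toFinset) := by
    intro T hT
    simpa using contributory_of_isKer (Finset.mem_coe.1 hT) (hker T)
  rw [centralMoment_eq_card, finsum_mem_eq_finite_toFinset_sum _ (Set.toFinite _),
    Finset.card_eq_sum_card_fiberwise hmaps, Nat.cast_sum]
  refine Finset.sum_congr rfl fun Pt hPt => ?_
  have hC : Contributory Pt := by simpa using hPt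
  rw [asEq_eq_image hC.2, Set.ncard_image_of_injective _ toAssignment_injective,
    ← Set.ncard_coe_finset]
  congr 2
  ext T
  simp only [coe_filter, Set.mem_ofPred_eq]
  exact and_congr_right fun _ => ⟨fun h => h ▸ hker T, fun h => (hker T).unique h⟩
end
end

section
/- Let p ∈ ℕ and let 𝒫 be a contributory partition of [p]×[2]×[2]. Then for each e ∈ [p], the restriction of 𝒫 to {e}×[2]×[2] is a partition of {e}×[2]×[2] whose class cardinalities form the multiset {2,1,1} or the multiset {1,1,1,1}. In the former case the class of cardinality 2 is {(e,s,0),(e,s,1)} for some s ∈ [2], so the restriction is {{(e,s,0),(e,s,1)}, {(e,1-s,0)}, {(e,1-s,1)}}; in the latter case the restriction consists of the four singletons {(e,0,0)}, {(e,0,1)}, {(e,1,0)}, {(e,1,1)}. -/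
/-- The level set of `τ` inside `{e} × [2] × [2]` at the value `n`. -/
def levelSet {p : ℕ} (τ : Idx p → ℕ) (e : Fin p) (n : ℕ) : Finset (Idx p) :=
  Finset.univ.filter fun x => x.1 = e ∧ τ x = n

lemma levelSet_card {p : ℕ} (τ : Idx p → ℕ) (e : Fin p) (n : ℕ) :
    (levelSet τ e n).card =
      (if τ (e, 0, 0) = n then 1 else 0) + (if τ (e, 0, 1) = n then 1 else 0) +
      ((if τ (e, 1, 0) = n then 1 else 0) + (if τ (e, 1, 1) = n then 1 else 0)) := by
  have h : levelSet τ e n =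
      ((Finset.univ : Finset (Fin 2 × Fin 2)).filter fun y => τ (e, y) = n).image
        fun y => (e, y) := by
    ext ⟨e', y⟩
    simp only [levelSet, Finset.mem_filter, Finset.mem_univ, true_and, Finset.mem_image,
      Prod.mk.injEq]
    constructor
    · rintro ⟨rfl, h⟩
      exact ⟨y, h, rfl, rfl⟩
    · rintro ⟨z, h, rfl, rfl⟩
      exact ⟨rfl, h⟩
  rw [h, Finset.card_image_of_injective _ (Prod.mk_right_injective e), Finset.card_filter,
    Fintype.sum_prod_type, Fin.sum_univ_two, Fin.sum_univ_two, Fin.sum_univ_two]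

lemma filter_part_eq_levelSet {p : ℕ} {Pt : Finpartition (Finset.univ : Finset (Idx p))}
    {τ : Idx p → ℕ} (hτ : ∀ β γ, τ β = τ γ ↔ SameClass Pt β γ) (e : Fin p)
    {P : Finset (Idx p)} (hP : P ∈ Pt.parts) {x : Idx p} (hx : x ∈ P) :
    (P.filter fun y => y.1 = e) = levelSet τ e (τ x) := by
  ext y
  simp only [levelSet, Finset.mem_filter, Finset.mem_univ, true_and, hτ]
  constructor
  · rintro ⟨hy, he⟩
    exact ⟨he, P, hP, hy, hx⟩
  · rintro ⟨he, Q, hQ, hyQ, hxQ⟩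
    rw [Pt.eq_of_mem_parts hP hQ hx hxQ]
    exact ⟨hyQ, he⟩

lemma restrictTo_eq {p : ℕ} {Pt : Finpartition (Finset.univ : Finset (Idx p))}
    {τ : Idx p → ℕ} (hτ : ∀ β γ, τ β = τ γ ↔ SameClass Pt β γ) (e : Fin p) :
    restrictTo Pt e =
      {levelSet τ e (τ (e, 0, 0)), levelSet τ e (τ (e, 0, 1)),
        levelSet τ e (τ (e, 1, 0)), levelSet τ e (τ (e, 1, 1))} := by
  have key : ∀ Q, Q ∈ restrictTo Pt e ↔ ∃ s v : Fin 2, Q = levelSet τ e (τ (e, s, v)) := by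
    intro Q
    simp only [restrictTo, Finset.mem_filter, Finset.mem_image]
    constructor
    · rintro ⟨⟨P, hP, rfl⟩, ⟨⟨e', s, v⟩, hx⟩⟩
      obtain ⟨hxP, rfl⟩ := Finset.mem_filter.1 hx
      exact ⟨s, v, filter_part_eq_levelSet hτ _ hP hxP⟩
    · rintro ⟨s, v, rfl⟩
      obtain ⟨P, hP, hx⟩ := Pt.exists_mem (Finset.mem_univ (e, s, v))
      exact ⟨⟨P, hP, filter_part_eq_levelSet hτ e hP hx⟩, (e, s, v), by simp [levelSet]⟩
  ext Q
  simp only [key, Fin.exists_fin_two, Finset.mem_insert, Finset.mem_singleton, or_assoc]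

/-- If `a + b = c + d` and some value `n` is taken an odd number of times among `a, b, c, d`,
then no value occurs on both sides, and the two sides are not both constant. -/
lemma values_of_odd {a b c d n : ℕ} (h : a + b = c + d)
    (hodd : Odd ((if a = n then 1 else 0) + (if b = n then 1 else 0) +
      ((if c = n then 1 else 0) + (if d = n then 1 else 0)))) :
    a ≠ c ∧ a ≠ d ∧ b ≠ c ∧ b ≠ d ∧ ¬ (a = b ∧ c = d) := by
  rw [Nat.odd_iff] at hodd
  split_ifs at hodd <;> omega

/-- For a contributory partition, the restriction to each equation `e` is either of
type `{2,1,1}` with the doubleton a twin class, or consists of four singletons. -/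
theorem restriction_of_contributory {p : ℕ}
    (Pt : Finpartition (Finset.univ : Finset (Idx p)))
    (h : Contributory Pt) (e : Fin p) :
    (∃ s : Fin 2, restrictTo Pt e =
        ({{(e, s, 0), (e, s, 1)}, {(e, 1 - s, 0)}, {(e, 1 - s, 1)}} :
          Finset (Finset (Idx p)))) ∨
      restrictTo Pt e =
        ({{(e, 0, 0)}, {(e, 0, 1)}, {(e, 1, 0)}, {(e, 1, 1)}} :
          Finset (Finset (Idx p))) := by
  obtain ⟨⟨τ, heq, hτ⟩, -, hodd⟩ := h
  obtain ⟨P, hP, hPodd⟩ := hodd e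
  obtain ⟨x, hx⟩ := Pt.nonempty_of_mem_parts hP
  rw [filter_part_eq_levelSet hτ e hP hx, levelSet_card] at hPodd
  obtain ⟨hac, had, hbc, hbd, hne⟩ := values_of_odd (heq e) hPodd
  -- A subset of `{e} × [2] × [2]` is determined by which of the four points it contains.
  have hext : ∀ (n : ℕ) (S : Finset (Idx p)), (∀ y ∈ S, y.1 = e) →
      (∀ s v : Fin 2, τ (e, s, v) = n ↔ (e, s, v) ∈ S) → levelSet τ e n = S := by
    intro n S hS h
    ext ⟨e', s, v⟩
    simp only [levelSet, Finset.mem_filter, Finset.mem_univ, true_and]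
    constructor
    · rintro ⟨rfl, h'⟩
      exact (h s v).1 h'
    · intro h'
      obtain rfl : e' = e := hS _ h'
      exact ⟨rfl, (h s v).2 h'⟩
  rw [restrictTo_eq hτ e]
  by_cases hab : τ (e, 0, 0) = τ (e, 0, 1)
  · have hcd : τ (e, 1, 0) ≠ τ (e, 1, 1) := fun h => hne ⟨hab, h⟩
    refine Or.inl ⟨0, ?_⟩
    rw [← hab, hext (τ (e, 0, 0)) {(e, 0, 0), (e, 0, 1)},
      hext (τ (e, 1, 0)) {(e, 1, 0)}, hext (τ (e, 1, 1)) {(e, 1, 1)}]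
    · simp
    all_goals simp [Fin.forall_fin_two] <;> grind
  · by_cases hcd : τ (e, 1, 0) = τ (e, 1, 1)
    · refine Or.inl ⟨1, ?_⟩
      rw [← hcd, hext (τ (e, 1, 0)) {(e, 1, 0), (e, 1, 1)},
        hext (τ (e, 0, 0)) {(e, 0, 0)}, hext (τ (e, 0, 1)) {(e, 0, 1)}]
      · ext Q
        simp only [Finset.mem_insert, Finset.mem_singleton, sub_self]
        tauto
      all_goals simp [Fin.forall_fin_two] <;> grind
    · refine Or.inr ?_
      rw [hext (τ (e, 0, 0)) {(e, 0, 0)}, hext (τ (e, 0, 1)) {(e, 0, 1)},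
        hext (τ (e, 1, 0)) {(e, 1, 0)}, hext (τ (e, 1, 1)) {(e, 1, 1)}]
      all_goals simp [Fin.forall_fin_two] <;> grind
end
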